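/- arXiv:1811.00049 — 2 statements merged into one kernel-verified Lean document; each statement's English description precedes it below -/
import Mathlib

section
/- Let k | h with h/k odd, and let w be a divisor of (q+1)/2. Let SU^±(2,p^k) denote the group of 2×2 matrices over the field with p^{2k} elements of the form [[a, t·c^{p^k}], [c, t·a^{p^k}]] with a^{p^k+1} − c^{p^k+1} = 1 and t ∈ {1,−1} (a group of order 2·p^k·(p^{2k}−1), isomorphic to SL(2,p^k) ⋊ C₂). Let L̄ ≤ M_ℓ be a subgroup such that |L̄ ∩ Z₁| = w and L̄ is the internal direct product of L̄ ∩ Z₁ and a subgroup H isomorphic to SU^±(2,p^k). Then the number N of orbits of L̄ acting on O equals 1 + (q−p^k)/(p^k(p^k−1)(p^k+1)) + (q+1)·gcd(p^k+1, w)/((p^k+1)·w) + (q²−q−p^k(p^k−1))·(q+1)/(2·p^k(p^{2k}−1)·w). -/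
/-!
By Burnside's lemma the number `N` of orbits is the average number of points of the Hermitian curve
fixed by an element of `L`. All elements of `L` are block diagonal, and `L` is the product of `H`
and the group of homologies `diag(ζ, ζ, 1)` with `ζ ^ w = 1` (`inter_Z1`). On the line at infinity
the homologies act trivially; an affine point `(x : y : 1)` is fixed by `diag(ζ⁻¹, ζ⁻¹, 1) h` exactly
if `(x, y)` is an eigenvector of `h` with eigenvalue `ζ`, of norm `1` for the Hermitian form
`x ^ (q+1) - y ^ (q+1)`. Hence (`orbit_sum`) `N w |H|` is `w` times the total number of fixed
isotropic points `(1 : y)` of elements of `H`, plus the total number of norm `1` eigenvectors of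
elements of `H` whose eigenvalue is a `w`-th root of unity.

Nothing is known about the embedding of `H` in the unitary group, except that `H` is abstractly the
group of unitary matrices of determinant `±1` over the field with `r ^ 2` elements, `r = p ^ k`. So
`H` has two faithful representations, `ρ` over `F` (the embedding) and `φ` over the small field (the
isomorphism), collected in the structure `Pair`. A nonscalar unitary matrix over the field with
`n ^ 2` elements is of one of three types (`unitary_type`): a double eigenvalue with one isotropic
eigenline; two orthogonal nonisotropic eigenlines, with eigenvalues of norm `1`; or two isotropic
eigenlines. The type determines both counts except in the second case, where the eigenvalues
matter. The type of `h` is visible in the order of `h`, and so is the same for `ρ` and `φ`, because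
`r - 1` divides `q - 1`, `r + 1` divides `q + 1` and `q ≡ r ≡ 1 (mod 4)`. In the second case `φ h`
is conjugate in `H` to `± (φ h)⁻¹`, which forces the determinants of `ρ h` and `φ h` to agree
(`Pair.det_eq`); given the determinant, the number of eigenvalues that are roots of unity of
a given odd order `e` is determined by whether `h ^ e = 1` and whether `h ^ (2 e) = 1`
(`count_eig`). This reduces all counts to the standard representation `φ` (`Pair.compare`), where
they are computed by double counting (`sum_iso`, `sum_non`). The scalar elements `±1` are treated
separately, which gives the totals `Pair.total_iso` and `Pair.total_non`.
-/

open Matrix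

noncomputable def glAct {F : Type*} [Field F] (M : GL (Fin 3) F)
    (x : Projectivization F (Fin 3 → F)) : Projectivization F (Fin 3 → F) :=
  Projectivization.map
    ((LinearMap.GeneralLinearGroup.generalLinearEquiv F (Fin 3 → F)
        (Matrix.GeneralLinearGroup.toLin M)).toLinearMap)
    ((LinearMap.GeneralLinearGroup.generalLinearEquiv F (Fin 3 → F)
        (Matrix.GeneralLinearGroup.toLin M)).injective) x

noncomputable def numOrbits {F : Type*} [Field F] (L : Subgroup (GL (Fin 3) F))
    (O : Set (Projectivization F (Fin 3 → F))) : ℕ :=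
  Nat.card ((fun x => {y | ∃ g ∈ L, glAct g x = y}) '' O :
    Set (Set (Projectivization F (Fin 3 → F))))

def hermitianPts (q : ℕ) (F : Type*) [Field F] : Set (Projectivization F (Fin 3 → F)) :=
  {x | x.rep 1 ^ (q + 1) = x.rep 0 ^ (q + 1) - x.rep 2 ^ (q + 1)}

def MlSet (q : ℕ) (F : Type*) [Field F] : Set (GL (Fin 3) F) :=
  {M | ∃ a c τ : F, a ^ (q + 1) - c ^ (q + 1) = 1 ∧ τ ^ (q + 1) = 1 ∧
    (M : Matrix (Fin 3) (Fin 3) F) = !![a, τ * c ^ q, 0; c, τ * a ^ q, 0; 0, 0, 1]}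

def ZSet (q : ℕ) (F : Type*) [Field F] : Set (GL (Fin 3) F) :=
  {M | ∃ ε : F, ε ^ (q + 1) = 1 ∧ (M : Matrix (Fin 3) (Fin 3) F) = Matrix.diagonal ![ε, ε, 1]}

def Z1Set (q : ℕ) (F : Type*) [Field F] : Set (GL (Fin 3) F) :=
  {M | ∃ ε : F, ε ^ ((q + 1) / 2) = 1 ∧
    (M : Matrix (Fin 3) (Fin 3) F) = Matrix.diagonal ![ε, ε, 1]}

/-! ### Roots of unity in finite fields -/

/-- In a finite field, if `m` divides the order of the unit group, an element `s` whose
`(|F|-1)/m`-th power is `1` has exactly `m` roots of degree `m`. -/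
lemma card_pow_eq {F : Type*} [Field F] [Fintype F] [DecidableEq F] (m d : ℕ)
    (hmd : m * d = Fintype.card F - 1) (s : F) (hs : s ^ d = 1) :
    (Finset.univ.filter (fun x : F => x ^ m = s)).card = m := by
  have hc : 1 < Fintype.card F := Fintype.one_lt_card
  have hpos : 0 < m * d := by omega
  have hm : 0 < m := pos_of_mul_pos_left hpos (Nat.zero_le _)
  have hd : 0 < d := pos_of_mul_pos_right hpos (Nat.zero_le _)
  obtain ⟨g, hg⟩ := IsCyclic.exists_generator (α := Fˣ)
  have hog : orderOf g = m * d := by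
    rw [orderOf_eq_card_of_forall_mem_zpowers hg, Nat.card_eq_fintype_card, Fintype.card_units, hmd]
  have hprim : IsPrimitiveRoot (g : F) (m * d) := by
    rw [IsPrimitiveRoot.coe_units_iff, ← hog]; exact IsPrimitiveRoot.orderOf g
  have hpm : IsPrimitiveRoot ((g : F) ^ d) m := hprim.pow hpos (by ring)
  have hpd : IsPrimitiveRoot ((g : F) ^ m) d := hprim.pow hpos rfl
  have : NeZero d := ⟨hd.ne'⟩
  obtain ⟨i, _, hi⟩ := hpd.eq_pow_of_pow_eq_one hs
  have hroot : ((g : F) ^ i) ^ m = s := by rw [← hi, ← pow_mul, ← pow_mul, mul_comm]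
  have h1 := hpm.nthRoots_eq hroot
  have hs0 : s ≠ 0 := by rintro rfl; simp [hd.ne'] at hs
  have hg0 : (g : F) ^ i ≠ 0 := by simp
  have hnd : (Polynomial.nthRoots m s).Nodup := by
    rw [h1]
    refine (Multiset.nodup_range m).map_on ?_
    intro x hx y hy hxy
    exact hpm.pow_inj (Multiset.mem_range.1 hx) (Multiset.mem_range.1 hy) (mul_right_cancel₀ hg0 hxy)
  have h2 : (Finset.univ.filter (fun x : F => x ^ m = s)) = (Polynomial.nthRoots m s).toFinset := by
    ext x; simp [Polynomial.mem_nthRoots hm]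
  rw [h2, Multiset.toFinset_card_of_nodup hnd, h1]
  simp

/-! ### Powers of two-by-two matrices -/

/-- The matrix is a scalar multiple of the identity. -/
def IsScal {F : Type*} [Field F] (M : Matrix (Fin 2) (Fin 2) F) : Prop :=
  M 0 1 = 0 ∧ M 1 0 = 0 ∧ M 0 0 = M 1 1

/-- The matrix has characteristic polynomial `(X - l) (X - m)`. -/
def HasEig {F : Type*} [Field F] (M : Matrix (Fin 2) (Fin 2) F) (l m : F) : Prop :=
  M 0 0 + M 1 1 = l + m ∧ M 0 0 * M 1 1 - M 0 1 * M 1 0 = l * m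

section
variable {F : Type*} [Field F] {M : Matrix (Fin 2) (Fin 2) F} {l m : F}

lemma HasEig.symm (h : HasEig M l m) : HasEig M m l := by
  unfold HasEig at *; grind

lemma HasEig.sq (h : HasEig M l m) : M * M = (l + m) • M - (l * m) • 1 := by
  obtain ⟨h1, h2⟩ := h
  ext i j
  fin_cases i <;> fin_cases j <;> simp [Matrix.mul_apply, Fin.sum_univ_two] <;> grind

lemma isScal_of_smul (x y : F) (hx : x ≠ 0) (h : x • M = y • 1) : IsScal M := by
  have e (i j) := congrFun (congrFun h i) j
  have e00 := e 0 0
  have e01 := e 0 1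
  have e10 := e 1 0
  have e11 := e 1 1
  simp at e00 e01 e10 e11
  refine ⟨by tauto, by tauto, mul_left_cancel₀ hx (e00.trans e11.symm)⟩

lemma HasEig.pow_distinct (h : HasEig M l m) (k : ℕ) :
    (l - m) • M ^ k = (l ^ k - m ^ k) • M - (l ^ k * m - m ^ k * l) • (1 : Matrix (Fin 2) (Fin 2) F) := by
  induction k with
  | zero => simp [← neg_smul]
  | succ k ih =>
    rw [pow_succ, ← smul_mul_assoc, ih, sub_mul, smul_mul_assoc, h.sq, smul_mul_assoc, one_mul]
    ext i j
    simp only [smul_sub, smul_smul, Matrix.sub_apply, Matrix.smul_apply, smul_eq_mul]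
    ring

lemma HasEig.pow_double (h : HasEig M l l) (k : ℕ) :
    M ^ (k + 1) = ((k + 1 : ℕ) * l ^ k) • M - (k * l ^ (k + 1)) • (1 : Matrix (Fin 2) (Fin 2) F) := by
  induction k with
  | zero => simp
  | succ k ih =>
    rw [pow_succ, ih, sub_mul, smul_mul_assoc, h.sq, smul_mul_assoc, one_mul]
    ext i j
    simp only [smul_sub, smul_smul, Matrix.sub_apply, Matrix.smul_apply, smul_eq_mul]
    push_cast
    ring

/-- A nonscalar matrix with a double eigenvalue has order divisible by the characteristic. -/
lemma HasEig.double_cast (h : HasEig M l l) (hM : ¬ IsScal M) (hl : l ≠ 0) (k : ℕ)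
    (hk : M ^ k = 1) : (k : F) = 0 := by
  cases k with
  | zero => simp
  | succ k =>
    by_contra hne
    apply hM
    rw [h.pow_double] at hk
    refine isScal_of_smul (((k + 1 : ℕ) : F) * l ^ k) (1 + k * l ^ (k + 1)) (mul_ne_zero hne (pow_ne_zero _ hl)) ?_
    rw [add_smul, one_smul]
    exact sub_eq_iff_eq_add.1 hk

lemma one_smul_inj {x y : F} (h : x • (1 : Matrix (Fin 2) (Fin 2) F) = y • 1) : x = y := by
  simpa using congrFun (congrFun h 0) 0

lemma HasEig.pow_eq_one (h : HasEig M l m) (hM : ¬ IsScal M) (hl : l ≠ 0) (k : ℕ)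
    (hk : M ^ k = 1) : l ^ k = 1 := by
  by_cases hlm : l = m
  · subst hlm
    have h0 := h.double_cast hM hl k hk
    cases k with
    | zero => simp
    | succ k =>
      rw [h.pow_double, h0, zero_mul, zero_smul, zero_sub, ← neg_smul] at hk
      have := one_smul_inj (hk.trans (one_smul F _).symm)
      push_cast at h0
      linear_combination this + l ^ (k + 1) * h0
  · have h1 := h.pow_distinct k
    rw [hk] at h1
    have h2 : l ^ k = m ^ k := by
      by_contra hne
      apply hM
      refine isScal_of_smul (l ^ k - m ^ k) ((l - m) + (l ^ k * m - m ^ k * l)) (sub_ne_zero.2 hne) ?_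
      rw [add_smul, h1]; simp
    rw [h2] at h1
    have h3 := one_smul_inj (x := l - m) (y := -(m ^ k * m - m ^ k * l)) (by rw [h1, sub_self, zero_smul, zero_sub, neg_smul])
    have h4 : (l - m) * (m ^ k - 1) = 0 := by linear_combination -h3
    rw [h2]
    rcases mul_eq_zero.1 h4 with h5 | h5
    · exact absurd (sub_eq_zero.1 h5) hlm
    · exact sub_eq_zero.1 h5

lemma HasEig.pow_one_of_distinct (h : HasEig M l m) (hlm : l ≠ m) (k : ℕ)
    (hl : l ^ k = 1) (hm : m ^ k = 1) : M ^ k = 1 := by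
  have h1 := h.pow_distinct k
  rw [hl, hm] at h1
  have h2 : (l - m) • M ^ k = (l - m) • (1 : Matrix (Fin 2) (Fin 2) F) := by
    rw [h1, sub_self, zero_smul, zero_sub, ← neg_smul]; congr 1; ring
  exact smul_right_injective _ (sub_ne_zero.2 hlm) h2

lemma HasEig.pow_one_of_double (h : HasEig M l l) (k : ℕ) (hk : 0 < k)
    (hl : l ^ k = 1) (hk0 : (k : F) = 0) : M ^ k = 1 := by
  obtain ⟨k, rfl⟩ : ∃ j, k = j + 1 := ⟨k - 1, by omega⟩
  rw [h.pow_double, hk0, zero_mul, zero_smul, zero_sub, ← neg_smul, hl]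
  have : -((k : F) * 1) = 1 := by push_cast at hk0; linear_combination -hk0
  rw [this, one_smul]

end

/-! ### Unitary two-by-two matrices -/

/-- `F` has `n ^ 2` elements, `n` is odd, and `x ↦ x ^ n` is a field involution. -/
structure Herm (n : ℕ) (F : Type*) [Field F] [Fintype F] : Prop where
  odd : Odd n
  card : Fintype.card F = n ^ 2
  add : ∀ x y : F, (x + y) ^ n = x ^ n + y ^ n

section
variable {F : Type*} [Field F] [Fintype F] {n : ℕ}

lemma Herm.inv (hn : Herm n F) (x : F) : (x ^ n) ^ n = x := by
  rw [← pow_mul, ← sq, ← hn.card, FiniteField.pow_card]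

lemma Herm.pos (hn : Herm n F) : 0 < n := hn.odd.pos

/-- The involution `x ↦ x ^ n` as a ring homomorphism. -/
def Herm.bar (hn : Herm n F) : F →+* F where
  toFun x := x ^ n
  map_one' := one_pow n
  map_mul' x y := mul_pow x y n
  map_zero' := zero_pow hn.pos.ne'
  map_add' := hn.add

lemma Herm.bar_apply (hn : Herm n F) (x : F) : hn.bar x = x ^ n := rfl

lemma Herm.bar_bar (hn : Herm n F) (x : F) : hn.bar (hn.bar x) = x := hn.inv x

lemma Herm.pow_succ (hn : Herm n F) (x : F) : x ^ (n + 1) = x * hn.bar x := by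
  rw [_root_.pow_succ', hn.bar_apply]

lemma Herm.one_lt (hn : Herm n F) : 1 < n := by
  have := Fintype.one_lt_card (α := F)
  rw [hn.card] at this
  by_contra h
  have : n = 0 ∨ n = 1 := by omega
  rcases this with rfl | rfl <;> simp at *

lemma Herm.card_sub_one (hn : Herm n F) : Fintype.card F - 1 = (n + 1) * (n - 1) := by
  rw [hn.card]
  obtain ⟨m, rfl⟩ : ∃ m, n = m + 1 := ⟨n - 1, by have := hn.pos; omega⟩
  simp; ring_nf; omega

lemma Herm.pow_pred (hn : Herm n F) (x : F) : x ^ (n - 1) * x = hn.bar x := by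
  rw [hn.bar_apply, ← _root_.pow_succ, Nat.sub_add_cancel hn.pos]

/-- The norm `x ↦ x ^ (n+1)` takes every nonzero value fixed by the involution exactly
`n + 1` times. -/
lemma Herm.card_norm [DecidableEq F] (hn : Herm n F) (s : F) (hs : s ≠ 0) (hs' : hn.bar s = s) :
    (Finset.univ.filter (fun x : F => x ^ (n + 1) = s)).card = n + 1 := by
  apply card_pow_eq (n + 1) (n - 1) hn.card_sub_one.symm
  have := hn.pow_pred s
  rw [hs'] at this
  exact mul_right_cancel₀ hs (this.trans (one_mul s).symm)

lemma Herm.two_ne (hn : Herm n F) : (2 : F) ≠ 0 := by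
  intro h
  have hr : ringChar F = 2 := by
    have h2 : ringChar F ∣ 2 := ringChar.dvd (by exact_mod_cast h)
    rcases (Nat.dvd_prime Nat.prime_two).1 h2 with h1 | h1
    · have : Subsingleton F := CharP.ringChar_ne_one (R := F) h1 |>.elim
      exact (one_ne_zero (Subsingleton.elim (1 : F) 0)).elim
    · exact h1
  have := FiniteField.even_card_of_char_two hr
  rw [hn.card] at this
  have h3 : Odd (n ^ 2) := hn.odd.pow
  rw [Nat.odd_iff] at h3
  omega

/-- `M` is the matrix with first column `(a, c)` and determinant `t` preserving the Hermitian form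
`x ^ (n+1) - y ^ (n+1)`. -/
def IsU (n : ℕ) (M : Matrix (Fin 2) (Fin 2) F) (a c t : F) : Prop :=
  a ^ (n + 1) - c ^ (n + 1) = 1 ∧ t ^ (n + 1) = 1 ∧ M = !![a, t * c ^ n; c, t * a ^ n]

variable [DecidableEq F]

/-- The isotropic points `(1 : y)` fixed by `M`. -/
def isoF (n : ℕ) (M : Matrix (Fin 2) (Fin 2) F) : Finset F :=
  Finset.univ.filter fun y => y ^ (n + 1) = 1 ∧ M 1 0 + M 1 1 * y = y * (M 0 0 + M 0 1 * y)

/-- The eigenvectors of `M` of norm `1` with eigenvalue `z`. -/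
def nonF (n : ℕ) (M : Matrix (Fin 2) (Fin 2) F) (z : F) : Finset (F × F) :=
  Finset.univ.filter fun v => v.1 ^ (n + 1) - v.2 ^ (n + 1) = 1 ∧
    M 0 0 * v.1 + M 0 1 * v.2 = z * v.1 ∧ M 1 0 * v.1 + M 1 1 * v.2 = z * v.2

/-- The two roots of the characteristic polynomial of a unitary matrix lie in `F`, since its
discriminant `Δ` satisfies `Δ ^ (n-1) = t ^ (-2)` and is therefore a square. -/
lemma exists_eig (hn : Herm n F) {M : Matrix (Fin 2) (Fin 2) F} {a c t : F} (hM : IsU n M a c t) :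
    ∃ l m, HasEig M l m ∧ l * m = t ∧ l + m = a + t * hn.bar a := by
  obtain ⟨h1, h2, rfl⟩ := hM
  rw [hn.pow_succ, hn.pow_succ] at h1
  rw [hn.pow_succ] at h2
  have ht : t ≠ 0 := by rintro rfl; simp at h2
  set T := a + t * hn.bar a with hT
  have hsq : IsSquare (T ^ 2 - 4 * t) := by
    by_cases h0 : T ^ 2 - 4 * t = 0
    · rw [h0]; exact ⟨0, by simp⟩
    set D := T ^ 2 - 4 * t with hD
    have h3 : t ^ 2 * hn.bar D = D := by
      rw [hD, hT]
      simp only [map_sub, map_mul, map_pow, map_add, hn.bar_bar, map_ofNat]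
      grind
    rw [FiniteField.isSquare_iff _ h0]
    · have h4 : t ^ 2 * D ^ (n - 1) = 1 := by
        rw [← hn.pow_pred D, ← mul_assoc] at h3
        exact mul_right_cancel₀ h0 (h3.trans (one_mul _).symm)
      obtain ⟨j, hj⟩ := hn.odd
      have h5 : Fintype.card F / 2 = (n - 1) * (j + 1) := by
        rw [hn.card, hj]; simp; ring_nf; omega
      rw [h5, pow_mul]
      have h6 : (t ^ 2 * D ^ (n - 1)) ^ (j + 1) = 1 := by rw [h4, one_pow]
      rw [mul_pow, ← pow_mul, show 2 * (j + 1) = n + 1 by omega, hn.pow_succ, h2, one_mul] at h6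
      exact h6
    · intro hr
      have := ringChar.Nat.cast_ringChar (R := F)
      rw [hr] at this
      exact hn.two_ne (by exact_mod_cast this)
  obtain ⟨s, hs⟩ := hsq
  have h2' := hn.two_ne
  have hlm : ((T + s) / 2) * ((T - s) / 2) = t := by
    field_simp; linear_combination hs
  have hlp : ((T + s) / 2) + ((T - s) / 2) = T := by field_simp; ring
  refine ⟨(T + s) / 2, (T - s) / 2, ⟨?_, ?_⟩, hlm, hlp⟩
  · rw [hlp]; simp [hT, hn.bar_apply]
  · rw [hlm]; simp only [Matrix.of_apply, Matrix.cons_val', Matrix.cons_val_zero, Matrix.cons_val_one, Matrix.cons_val_fin_one]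
    rw [← hn.bar_apply, ← hn.bar_apply]; linear_combination t * h1


/-- For `c ≠ 0`, the eigenvectors of norm `1` with eigenvalue `z` are the vectors `(x, x y)`
with `y = (z - a) / (t c̄)` and `x ^ (n+1) (1 - y ^ (n+1)) = 1`. -/
lemma nonF_card_root (hn : Herm n F) {a c t l m z : F} (hc : c ≠ 0)
    (h1 : a * hn.bar a - c * hn.bar c = 1) (h2 : t * hn.bar t = 1) (hlm : l * m = t)
    (hsum : l + m = a + t * hn.bar a) (hz : z = l ∨ z = m) :
    (nonF n !![a, t * c ^ n; c, t * a ^ n] z).card =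
      if ((z - a) / (t * hn.bar c)) ^ (n + 1) = 1 then 0 else n + 1 := by
  have ht : t ≠ 0 := by rintro rfl; simp at h2
  have hc' : hn.bar c ≠ 0 := by simpa using hc
  set y := (z - a) / (t * hn.bar c) with hy
  have hya : a + t * hn.bar c * y = z := by rw [hy]; field_simp; ring
  have hyb : c + t * hn.bar a * y = z * y := by
    rw [hy]; field_simp
    have : (z - l) * (z - m) = 0 := by rcases hz with rfl | rfl <;> simp
    linear_combination (-t * h1) - this - z * hsum + hlm
  have key : ∀ v : F × F, v ∈ nonF n !![a, t * c ^ n; c, t * a ^ n] z ↔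
      v.1 ^ (n + 1) * (1 - y ^ (n + 1)) = 1 ∧ v.2 = v.1 * y := by
    rintro ⟨x, x'⟩
    simp only [nonF, Finset.mem_filter, Finset.mem_univ, true_and, Matrix.of_apply, Matrix.cons_val',
      Matrix.cons_val_zero, Matrix.cons_val_one, Matrix.cons_val_fin_one]
    rw [← hn.bar_apply, ← hn.bar_apply]
    constructor
    · rintro ⟨e1, e2, e3⟩
      have : x' = x * y := by
        have : t * hn.bar c * (x' - x * y) = 0 := by linear_combination e2 - x * hya
        rcases mul_eq_zero.1 this with h | h
        · exact absurd h (mul_ne_zero ht hc')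
        · exact sub_eq_zero.1 h
      refine ⟨?_, this⟩
      rw [this, mul_pow] at e1
      linear_combination e1
    · rintro ⟨e1, rfl⟩
      refine ⟨?_, ?_, ?_⟩
      · rw [mul_pow]; linear_combination e1
      · linear_combination x * hya
      · linear_combination x * hyb
  split_ifs with hN
  · rw [Finset.card_eq_zero, Finset.eq_empty_iff_forall_notMem]
    intro v hv
    have := ((key v).1 hv).1
    rw [hN] at this; simp at this
  · have hN' : 1 - y ^ (n + 1) ≠ 0 := fun h => hN (sub_eq_zero.1 h).symm
    rw [← hn.card_norm (1 - y ^ (n + 1))⁻¹ (inv_ne_zero hN')]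
    · symm
      refine Finset.card_bij (fun x _ => (x, x * y)) ?_ ?_ ?_
      · intro x hx
        rw [key]
        simp only [Finset.mem_filter, Finset.mem_univ, true_and] at hx
        simp [hx, hN']
      · intro x _ x' _ h; simpa using (Prod.ext_iff.1 h).1
      · intro v hv
        obtain ⟨e1, e2⟩ := (key v).1 hv
        refine ⟨v.1, ?_, Prod.ext rfl e2.symm⟩
        simp only [Finset.mem_filter, Finset.mem_univ, true_and]
        exact eq_inv_of_mul_eq_one_left e1
    · rw [map_inv₀, map_sub, map_one, hn.pow_succ, map_mul, hn.bar_bar, mul_comm]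

/-- Every eigenvector of a unitary matrix with `c ≠ 0` has an eigenvalue among the roots of the
characteristic polynomial. -/
lemma nonF_card_nonroot (hn : Herm n F) {a c t l m z : F}
    (h1 : a * hn.bar a - c * hn.bar c = 1) (hlm : l * m = t)
    (hsum : l + m = a + t * hn.bar a) (hz : z ≠ l ∧ z ≠ m) :
    (nonF n !![a, t * c ^ n; c, t * a ^ n] z).card = 0 := by
  rw [Finset.card_eq_zero, Finset.eq_empty_iff_forall_notMem]
  rintro ⟨x, y⟩ hv
  simp only [nonF, Finset.mem_filter, Finset.mem_univ, true_and, Matrix.of_apply, Matrix.cons_val',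
      Matrix.cons_val_zero, Matrix.cons_val_one, Matrix.cons_val_fin_one] at hv
  rw [← hn.bar_apply, ← hn.bar_apply] at hv
  obtain ⟨e1, e2, e3⟩ := hv
  have hzz : (z - l) * (z - m) ≠ 0 := mul_ne_zero (sub_ne_zero.2 hz.1) (sub_ne_zero.2 hz.2)
  have hq : (z - l) * (z - m) = (z - a) * (z - t * hn.bar a) - t * hn.bar c * c := by
    linear_combination (-z) * hsum + hlm - t * h1
  have hx : x = 0 := by
    have : ((z - l) * (z - m)) * x = 0 := by
      rw [hq]; linear_combination -(z - t * hn.bar a) * e2 - t * hn.bar c * e3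
    exact (mul_eq_zero.1 this).resolve_left hzz
  have hy : y = 0 := by
    have : ((z - l) * (z - m)) * y = 0 := by
      rw [hq]; linear_combination -(z - a) * e3 - c * e2
    exact (mul_eq_zero.1 this).resolve_left hzz
  rw [hx, hy] at e1; simp at e1

/-- For `c ≠ 0`, the fixed isotropic points are `(1 : (z - a) / (t c̄))`, `z` an eigenvalue. -/
lemma mem_isoF (hn : Herm n F) {a c t l m y : F} (hc : c ≠ 0)
    (h1 : a * hn.bar a - c * hn.bar c = 1) (h2 : t * hn.bar t = 1) (hlm : l * m = t)
    (hsum : l + m = a + t * hn.bar a) :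
    y ∈ isoF n !![a, t * c ^ n; c, t * a ^ n] ↔
      y ^ (n + 1) = 1 ∧ (y = (l - a) / (t * hn.bar c) ∨ y = (m - a) / (t * hn.bar c)) := by
  have ht : t ≠ 0 := by rintro rfl; simp at h2
  have hc' : hn.bar c ≠ 0 := by simpa using hc
  simp only [isoF, Finset.mem_filter, Finset.mem_univ, true_and, Matrix.of_apply, Matrix.cons_val',
      Matrix.cons_val_zero, Matrix.cons_val_one, Matrix.cons_val_fin_one]
  rw [← hn.bar_apply, ← hn.bar_apply]
  refine and_congr_right fun _ => ?_
  rw [eq_div_iff (mul_ne_zero ht hc'), eq_div_iff (mul_ne_zero ht hc')]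
  have : (y * (t * hn.bar c) - (l - a)) * (y * (t * hn.bar c) - (m - a)) =
      - (t * hn.bar c) * (c + t * hn.bar a * y - y * (a + t * hn.bar c * y)) := by
    linear_combination (-y * t * hn.bar c - a) * hsum + hlm - t * h1
  rw [← sub_eq_zero, ← sub_eq_zero (a := y * (t * hn.bar c)) (b := l - a),
    ← sub_eq_zero (a := y * (t * hn.bar c)) (b := m - a), ← mul_eq_zero, this, mul_eq_zero]
  simp [ht, hc]

/-- Trichotomy for nonscalar unitary matrices in terms of their eigenvalues `l`, `m`: a double
eigenvalue (one isotropic eigenline), distinct eigenvalues of norm `1` (two nonisotropic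
eigenlines), or distinct eigenvalues not of norm `1` (two isotropic eigenlines). -/
theorem unitary_type (hn : Herm n F) {M : Matrix (Fin 2) (Fin 2) F} {a c t : F}
    (hM : IsU n M a c t) (hs : ¬ IsScal M) :
    ∃ l m, HasEig M l m ∧ l * m = t ∧ l ≠ 0 ∧ m ≠ 0 ∧
      ((l = m ∧ l ^ (n + 1) = 1 ∧ (isoF n M).card = 1 ∧ ∀ z, (nonF n M z).card = 0) ∨
      (l ≠ m ∧ l ^ (n + 1) = 1 ∧ m ^ (n + 1) = 1 ∧ (isoF n M).card = 0 ∧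
        ∀ z, (nonF n M z).card = (n + 1) * ((if z = l then 1 else 0) + if z = m then 1 else 0)) ∨
      (l ≠ m ∧ l ^ (n + 1) ≠ 1 ∧ l = t * l ^ n ∧ m = t * m ^ n ∧ (isoF n M).card = 2 ∧
        ∀ z, (nonF n M z).card = 0)) := by
  obtain ⟨l, m, he, hlm, hsum⟩ := exists_eig hn hM
  obtain ⟨h1, h2, rfl⟩ := hM
  rw [hn.pow_succ, hn.pow_succ] at h1
  rw [hn.pow_succ] at h2
  have ht : t ≠ 0 := by rintro rfl; simp at h2
  by_cases hc : c = 0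
  · subst hc
    simp only [map_zero, mul_zero, sub_zero] at h1
    have hn0 : n ≠ 0 := hn.pos.ne'
    have ha : a ≠ 0 := by rintro rfl; simp at h1
    have hab : hn.bar a ≠ 0 := by simpa using ha
    have hne : a ≠ t * hn.bar a := by
      intro h; apply hs; refine ⟨by simp [hn0], by simp, by simpa [hn.bar_apply] using h⟩
    refine ⟨a, t * hn.bar a, ⟨by simp [hn.bar_apply], by simp [hn.bar_apply]⟩,
      by linear_combination t * h1, ha, mul_ne_zero ht hab, Or.inr (Or.inl ⟨hne, ?_, ?_, ?_, ?_⟩)⟩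
    · rw [hn.pow_succ, h1]
    · rw [hn.pow_succ, map_mul, hn.bar_bar]; linear_combination h1 * (t * hn.bar t) + h2
    · rw [Finset.card_eq_zero, Finset.eq_empty_iff_forall_notMem]
      intro y hy
      simp [isoF, ← hn.bar_apply] at hy
      have hy0 : y ≠ 0 := by rintro rfl; simp at hy
      exact hne (mul_right_cancel₀ hy0 (hy.2.trans (mul_comm _ _))).symm
    · intro z
      have hsplit : ∀ x y : F, (x, y) ∈ nonF n !![a, t * 0 ^ n; 0, t * a ^ n] z ↔
          x ^ (n + 1) - y ^ (n + 1) = 1 ∧ (a - z) * x = 0 ∧ (t * hn.bar a - z) * y = 0 := by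
        intro x y
        simp [nonF, ← hn.bar_apply, sub_mul, sub_eq_zero]
      by_cases hza : z = a
      · subst hza
        simp only [if_true, if_neg hne]
        rw [add_zero, mul_one, ← hn.card_norm 1 one_ne_zero (map_one _)]
        symm
        refine Finset.card_bij (fun x _ => (x, 0)) ?_ ?_ ?_
        · intro x hx
          simp only [Finset.mem_filter, Finset.mem_univ, true_and] at hx
          rw [hsplit]; simp [hx]
        · intro x _ x' _ h; simpa using (Prod.ext_iff.1 h).1
        · rintro ⟨x, y⟩ hv
          obtain ⟨e1, _, e3⟩ := (hsplit x y).1 hv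
          have hy : y = 0 := (mul_eq_zero.1 e3).resolve_left (sub_ne_zero.2 hne.symm)
          subst hy
          refine ⟨x, ?_, rfl⟩
          simpa using e1
      · by_cases hzb : z = t * hn.bar a
        · subst hzb
          simp only [if_true, if_neg hza]
          rw [zero_add, mul_one, ← hn.card_norm (-1) (by simp) (by simp)]
          symm
          refine Finset.card_bij (fun x _ => (0, x)) ?_ ?_ ?_
          · intro x hx
            simp only [Finset.mem_filter, Finset.mem_univ, true_and] at hx
            rw [hsplit]; simp [hx]
          · intro x _ x' _ h; simpa using (Prod.ext_iff.1 h).2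
          · rintro ⟨x, y⟩ hv
            obtain ⟨e1, e2, _⟩ := (hsplit x y).1 hv
            have hx : x = 0 := (mul_eq_zero.1 e2).resolve_left (sub_ne_zero.2 hne)
            subst hx
            refine ⟨y, ?_, rfl⟩
            simp only [Finset.mem_filter, Finset.mem_univ, true_and]
            simp at e1
            linear_combination -e1
        · simp only [if_neg hza, if_neg hzb]
          rw [add_zero, mul_zero, Finset.card_eq_zero, Finset.eq_empty_iff_forall_notMem]
          rintro ⟨x, y⟩ hv
          obtain ⟨e1, e2, e3⟩ := (hsplit x y).1 hv
          have hx : x = 0 := (mul_eq_zero.1 e2).resolve_left (sub_ne_zero.2 (Ne.symm hza))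
          have hy : y = 0 := (mul_eq_zero.1 e3).resolve_left (sub_ne_zero.2 (Ne.symm hzb))
          subst hx hy
          simp at e1
  · have hc' : hn.bar c ≠ 0 := by simpa using hc
    have hl0 : l ≠ 0 := by rintro rfl; simp at hlm; exact ht hlm.symm
    have hm0 : m ≠ 0 := by rintro rfl; simp at hlm; exact ht hlm.symm
    refine ⟨l, m, he, hlm, hl0, hm0, ?_⟩
    have hroot := fun z (hz : z = l ∨ z = m) => nonF_card_root hn hc h1 h2 hlm hsum hz
    have hnonroot := fun z hz => nonF_card_nonroot (z := z) hn h1 hlm hsum hz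
    have hiso := fun y => mem_isoF (y := y) hn hc h1 h2 hlm hsum
    have hnorm : ∀ z, ((z - a) / (t * hn.bar c)) ^ (n + 1) = 1 ↔
        (z - a) * (hn.bar z - hn.bar a) = c * hn.bar c := by
      intro z
      have htb : hn.bar t ≠ 0 := by simpa using ht
      rw [hn.pow_succ, map_div₀, map_mul, map_sub, hn.bar_bar, div_mul_div_comm, div_eq_one_iff_eq]
      · rw [show t * hn.bar c * (hn.bar t * c) = c * hn.bar c by linear_combination c * hn.bar c * h2]
      · exact mul_ne_zero (mul_ne_zero ht hc') (mul_ne_zero htb hc)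
    have hsb : hn.bar l + hn.bar m = hn.bar a + hn.bar t * a := by
      rw [← map_add, hsum, map_add, map_mul, hn.bar_bar]
    have hlmb : hn.bar l * hn.bar m = hn.bar t := by rw [← map_mul, hlm]
    have hYinj : l ≠ m → (l - a) / (t * hn.bar c) ≠ (m - a) / (t * hn.bar c) := by
      intro hne h
      rw [div_left_inj' (mul_ne_zero ht hc')] at h
      exact hne (sub_left_injective h)
    have hla : l ≠ a := by
      rintro rfl
      have hm : m = t * hn.bar l := by linear_combination hsum
      rw [hm] at hlm
      have : t * (c * hn.bar c) = 0 := by linear_combination hlm - t * h1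
      simp [ht, hc] at this
    have hma : m ≠ a := by
      rintro rfl
      have hm : l = t * hn.bar m := by linear_combination hsum
      rw [hm] at hlm
      have : t * (c * hn.bar c) = 0 := by linear_combination hlm - t * h1
      simp [ht, hc] at this
    have hperm : (t * hn.bar l = l ∧ t * hn.bar m = m) ∨ (t * hn.bar l = m ∧ t * hn.bar m = l) := by
      have : (t * hn.bar l - l) * (t * hn.bar l - m) = 0 := by
        linear_combination (t ^ 2 * hn.bar l) * hsb - t ^ 2 * hlmb - t * hn.bar l * hsum + hlm
          + (t * hn.bar l * a - t) * h2
      rcases mul_eq_zero.1 this with h | h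
      · left; refine ⟨sub_eq_zero.1 h, ?_⟩
        linear_combination t * hsb - h - hsum + a * h2
      · right; refine ⟨sub_eq_zero.1 h, ?_⟩
        linear_combination t * hsb - h - hsum + a * h2
    rcases hperm with ⟨p1, p2⟩ | ⟨p1, p2⟩
    · -- both eigenlines are isotropic
      have hNl : ((l - a) / (t * hn.bar c)) ^ (n + 1) = 1 := by
        rw [hnorm]
        have : t * ((l - a) * (hn.bar l - hn.bar a)) = t * (c * hn.bar c) := by
          linear_combination (l - a) * p1 + l * hsum - hlm + t * h1
        exact mul_left_cancel₀ ht this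
      have hNm : ((m - a) / (t * hn.bar c)) ^ (n + 1) = 1 := by
        rw [hnorm]
        have : t * ((m - a) * (hn.bar m - hn.bar a)) = t * (c * hn.bar c) := by
          linear_combination (m - a) * p2 + m * hsum - hlm + t * h1
        exact mul_left_cancel₀ ht this
      have hnon0 : ∀ z, (nonF n !![a, t * c ^ n; c, t * a ^ n] z).card = 0 := by
        intro z
        by_cases hz : z = l ∨ z = m
        · rw [hroot z hz, if_pos]
          rcases hz with rfl | rfl <;> assumption
        · exact hnonroot z (by tauto)
      have hset : isoF n !![a, t * c ^ n; c, t * a ^ n] =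
          {(l - a) / (t * hn.bar c), (m - a) / (t * hn.bar c)} := by
        ext y
        rw [hiso]
        simp only [Finset.mem_insert, Finset.mem_singleton]
        constructor
        · exact And.right
        · rintro (rfl | rfl) <;> simp [hNl, hNm]
      by_cases hlm' : l = m
      · left
        refine ⟨hlm', ?_, ?_, hnon0⟩
        · rw [hn.pow_succ]
          have : t * (l * hn.bar l) = t * 1 := by
            rw [← hlm'] at hlm; linear_combination l * p1 + hlm
          exact mul_left_cancel₀ ht this
        · rw [hset, hlm']; simp
      · right; right
        refine ⟨hlm', ?_, ?_, ?_, ?_, hnon0⟩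
        · rw [hn.pow_succ]
          intro h
          apply hlm'
          have : l * l = l * m := by linear_combination (-l) * p1 + t * h - hlm
          exact mul_left_cancel₀ hl0 this
        · rw [← hn.bar_apply, p1]
        · rw [← hn.bar_apply, p2]
        · rw [hset, Finset.card_pair (hYinj hlm')]
    · have hl1 : l ^ (n + 1) = 1 := by
        rw [hn.pow_succ]
        exact mul_left_cancel₀ ht (by linear_combination l * p1 + hlm)
      have hm1 : m ^ (n + 1) = 1 := by
        rw [hn.pow_succ]
        exact mul_left_cancel₀ ht (by linear_combination m * p2 + hlm)
      by_cases hlm' : l = m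
      · subst hlm'
        have hNl : ((l - a) / (t * hn.bar c)) ^ (n + 1) = 1 := by
          rw [hnorm]
          have : t * ((l - a) * (hn.bar l - hn.bar a)) = t * (c * hn.bar c) := by
            linear_combination (l - a) * p1 + l * hsum - hlm + t * h1
          exact mul_left_cancel₀ ht this
        left
        refine ⟨rfl, hl1, ?_, ?_⟩
        · rw [Finset.card_eq_one]
          refine ⟨(l - a) / (t * hn.bar c), ?_⟩
          ext y
          rw [hiso, Finset.mem_singleton]
          constructor
          · tauto
          · rintro rfl; simp [hNl]
        · intro z
          by_cases hz : z = l ∨ z = l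
          · rw [hroot z hz, if_pos]
            rcases hz with rfl | rfl <;> assumption
          · exact hnonroot z (by tauto)
      · -- both eigenlines are nonisotropic
        have hNl : ((l - a) / (t * hn.bar c)) ^ (n + 1) ≠ 1 := by
          rw [Ne, hnorm]
          intro h
          have : (l - m) * (l - a) = 0 := by
            linear_combination (l - a) * p1 - t * h + l * hsum - hlm + t * h1
          exact mul_ne_zero (sub_ne_zero.2 hlm') (sub_ne_zero.2 hla) this
        have hNm : ((m - a) / (t * hn.bar c)) ^ (n + 1) ≠ 1 := by
          rw [Ne, hnorm]
          intro h
          have : (m - l) * (m - a) = 0 := by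
            linear_combination (m - a) * p2 - t * h + m * hsum - hlm + t * h1
          exact mul_ne_zero (sub_ne_zero.2 (Ne.symm hlm')) (sub_ne_zero.2 hma) this
        right; left
        refine ⟨hlm', hl1, hm1, ?_, ?_⟩
        · rw [Finset.card_eq_zero, Finset.eq_empty_iff_forall_notMem]
          intro y hy
          rw [hiso] at hy
          obtain ⟨h, rfl | rfl⟩ := hy
          · exact hNl h
          · exact hNm h
        · intro z
          by_cases hzl : z = l
          · rw [hroot z (Or.inl hzl), hzl, if_neg hNl]; simp [hlm']
          · by_cases hzm : z = m
            · rw [hroot z (Or.inr hzm), hzm, if_neg hNm]; simp [Ne.symm hlm']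
            · rw [hnonroot z ⟨hzl, hzm⟩]; simp [hzl, hzm]

end

/-! ### Counting in the model -/

lemma Herm.bar_sign {F : Type*} [Field F] [Fintype F] {n : ℕ} (hn : Herm n F) {t : F}
    (ht : t = 1 ∨ t = -1) : hn.bar t = t := by
  rcases ht with rfl | rfl <;> simp

lemma sign_sq {F : Type*} [Field F] {t : F} (ht : t = 1 ∨ t = -1) : t * t = 1 := by
  rcases ht with rfl | rfl <;> simp

section
variable {F : Type*} [Field F] [Fintype F] [DecidableEq F] {n : ℕ}

/-- The vectors of norm `1`. -/
def sph (n : ℕ) (F : Type*) [Field F] [Fintype F] [DecidableEq F] : Finset (F × F) :=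
  Finset.univ.filter fun v => v.1 ^ (n + 1) - v.2 ^ (n + 1) = 1

/-- The unitary matrix with first column `v` and determinant `t`. -/
def umat (n : ℕ) (v : F × F) (t : F) : Matrix (Fin 2) (Fin 2) F :=
  !![v.1, t * v.2 ^ n; v.2, t * v.1 ^ n]

lemma sph_card (hn : Herm n F) : (sph n F).card = (n + 1) * (n * (n - 1)) := by
  have h1 : (sph n F).card =
      ∑ c : F, (Finset.univ.filter fun a : F => a ^ (n + 1) = 1 + c ^ (n + 1)).card := by
    simp only [sph, Finset.card_filter, Fintype.sum_prod_type]
    rw [Finset.sum_comm]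
    simp only [sub_eq_iff_eq_add]
  have h2 : ∀ c : F, (Finset.univ.filter fun a : F => a ^ (n + 1) = 1 + c ^ (n + 1)).card =
      if c ^ (n + 1) = -1 then 1 else n + 1 := by
    intro c
    split_ifs with h
    · rw [h, Finset.card_eq_one]
      exact ⟨0, by ext a; simp⟩
    · apply hn.card_norm
      · intro h'; apply h; linear_combination h'
      · rw [map_add, map_one, hn.pow_succ, map_mul, hn.bar_bar, mul_comm]
  have h3 := hn.card_norm (-1) (by simp) (by simp)
  have h4 := Finset.card_filter_add_card_filter_not (s := (Finset.univ : Finset F))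
    (fun c : F => c ^ (n + 1) = -1)
  rw [h3, Finset.card_univ, hn.card] at h4
  rw [h1, Finset.sum_congr rfl (fun c _ => h2 c), Finset.sum_ite, Finset.sum_const, Finset.sum_const, h3]
  simp only [smul_eq_mul, mul_one]
  obtain ⟨j, rfl⟩ : ∃ j, n = j + 1 := ⟨n - 1, by have := hn.pos; omega⟩
  simp only [Nat.add_sub_cancel]
  have : (Finset.univ.filter fun c : F => ¬ c ^ (j + 1 + 1) = -1).card + 1 = (j + 1) * j := by
    nlinarith
  nlinarith

/-- Over each determinant `t = ±1`, an isotropic point `(1 : y)` is fixed by `n (n-1)` unitary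
matrices: with `c = c' y` and `u = a - c'` the conditions become `ū = t u` and
`c̄' + t c' = 1/u - t u`. -/
lemma card_fix_iso (hn : Herm n F) {t : F} (ht : t = 1 ∨ t = -1) {y : F} (hy : y ^ (n + 1) = 1) :
    ((sph n F).filter fun v => y ∈ isoF n (umat n v t)).card = n * (n - 1) := by
  have htt := sign_sq ht
  have htb := hn.bar_sign ht
  have ht0 : t ≠ 0 := by rintro rfl; simp at htt
  have h2 := hn.two_ne
  have hy0 : y ≠ 0 := by rintro rfl; simp at hy
  have hyb := hn.pow_succ y
  rw [hy] at hyb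
  have hc1 : (Finset.univ.filter fun u : F => u ^ (n - 1) = t).card = n - 1 := by
    apply card_pow_eq (n - 1) (n + 1)
    · rw [hn.card_sub_one, mul_comm]
    · rw [hn.pow_succ, htb, htt]
  have hc2 : (Finset.univ.filter fun k : F => hn.bar k = -t * k).card = n := by
    have hc3 : (Finset.univ.filter fun u : F => u ^ (n - 1) = -t).card = n - 1 := by
      apply card_pow_eq (n - 1) (n + 1)
      · rw [hn.card_sub_one, mul_comm]
      · rw [hn.pow_succ, map_neg, htb]; linear_combination htt
    have : (Finset.univ.filter fun k : F => hn.bar k = -t * k) =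
        insert 0 (Finset.univ.filter fun u : F => u ^ (n - 1) = -t) := by
      ext k
      by_cases hk : k = 0
      · simp [hk]
      · simp only [Finset.mem_filter, Finset.mem_univ, true_and, Finset.mem_insert, hk, false_or]
        rw [← hn.pow_pred k]
        exact mul_left_inj' hk
    have hn1 := hn.one_lt
    rw [this, Finset.card_insert_of_notMem, hc3]
    · omega
    · simp only [Finset.mem_filter, Finset.mem_univ, true_and]
      rw [zero_pow (by omega)]; intro h; exact ht0 (by linear_combination h)
  have hprod : n * (n - 1) = ((Finset.univ.filter fun u : F => u ^ (n - 1) = t) ×ˢ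
      (Finset.univ.filter fun k : F => hn.bar k = -t * k)).card := by
    rw [Finset.card_product, hc1, hc2, mul_comm]
  rw [hprod]
  symm
  have hu : ∀ u : F, u ^ (n - 1) = t ↔ u ≠ 0 ∧ hn.bar u = t * u := by
    intro u
    rw [← hn.pow_pred u]
    constructor
    · intro h
      refine ⟨?_, by rw [h]⟩
      rintro rfl
      rw [zero_pow (by have := hn.one_lt; omega)] at h; exact ht0 h.symm
    · rintro ⟨h, h'⟩
      exact mul_right_cancel₀ h h'
  have hmem : ∀ a c : F, (a, c) ∈ ((sph n F).filter fun v => y ∈ isoF n (umat n v t)) ↔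
      a * hn.bar a - c * hn.bar c = 1 ∧ c + t * hn.bar a * y = y * (a + t * hn.bar c * y) := by
    intro a c
    simp [sph, isoF, umat, hy, ← hn.bar_apply, ← hn.pow_succ]
  refine Finset.card_nbij'
    (fun w => (w.1 + (t * (1 / w.1 - t * w.1) / 2 + w.2), (t * (1 / w.1 - t * w.1) / 2 + w.2) * y))
    (fun v => (v.1 - v.2 / y, v.2 / y - t * (1 / (v.1 - v.2 / y) - t * (v.1 - v.2 / y)) / 2)) ?_ ?_ ?_ ?_
  · rintro ⟨u, k⟩ h
    simp only [Finset.mem_coe, Finset.mem_product, Finset.mem_filter, Finset.mem_univ, true_and, hu] at h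
    obtain ⟨⟨hu0, hub⟩, hkb⟩ := h
    rw [Finset.mem_coe, hmem]
    simp only [map_add, map_mul, map_div₀, map_sub, map_one, htb, hub, hkb, map_ofNat]
    have hybar : hn.bar y = 1 / y := by field_simp; linear_combination -hyb
    rw [hybar]
    rcases ht with rfl | rfl <;> constructor <;> field_simp <;> ring
  · rintro ⟨a, c⟩ h
    rw [Finset.mem_coe, hmem] at h
    obtain ⟨e1, e2⟩ := h
    obtain ⟨c', rfl⟩ : ∃ c', c = c' * y := ⟨c / y, by field_simp⟩
    have hcy : c' * y / y = c' := by field_simp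
    simp only [hcy]
    rw [map_mul] at e1 e2
    have e1' : a * hn.bar a - c' * hn.bar c' = 1 := by linear_combination e1 - c' * hn.bar c' * hyb
    have e2' : a - c' = t * (hn.bar a - hn.bar c') := by
      have : y * (a - c') = y * (t * (hn.bar a - hn.bar c')) := by
        linear_combination -e2 + t * hn.bar c' * y * hyb
      exact mul_left_cancel₀ hy0 this
    have hub : hn.bar (a - c') = t * (a - c') := by
      rw [map_sub]; linear_combination (-t) * e2' - (hn.bar a - hn.bar c') * htt
    have hu0 : a - c' ≠ 0 := by
      intro h0
      have hb : hn.bar a - hn.bar c' = 0 := by rw [← map_sub, h0, map_zero]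
      have : (1 : F) = 0 := by linear_combination -e1' + hn.bar a * h0 + c' * hb
      exact one_ne_zero this
    set u := a - c' with hudef
    have hrel : hn.bar c' + t * c' = 1 / u - t * u := by
      have ha : a = u + c' := by rw [hudef]; ring
      rw [ha, map_add, hub] at e1'
      field_simp
      linear_combination e1'
    simp only [Finset.mem_coe, Finset.mem_product, Finset.mem_filter, Finset.mem_univ, true_and, hu]
    refine ⟨⟨hu0, hub⟩, ?_⟩
    simp only [map_mul, map_div₀, map_sub, map_one, htb, hub, map_ofNat]
    have hb : hn.bar c' = 1 / u - t * u - t * c' := by linear_combination hrel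
    rw [hb]
    rcases ht with rfl | rfl <;> field_simp <;> ring
  · rintro ⟨u, k⟩ _
    have : ∀ x : F, x * y / y = x := fun x => by field_simp
    simp only [this, add_sub_cancel_right, add_sub_cancel_left]
  · rintro ⟨a, c⟩ _
    simp only [add_sub_cancel, sub_add_cancel]
    rw [div_mul_cancel₀ _ hy0]

/-- For each `t = ±1` and each vector `w` of norm `1` there is exactly one unitary matrix of
determinant `t` for which `w` is an eigenvector with the eigenvalue `z` of norm `1`. -/
lemma card_fix_non (hn : Herm n F) {t : F} (ht : t = 1 ∨ t = -1) {z : F} (hz : z ^ (n + 1) = 1)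
    {w : F × F} (hw : w ∈ sph n F) :
    ((sph n F).filter fun v => w ∈ nonF n (umat n v t) z).card = 1 := by
  have htt := sign_sq ht
  have htb := hn.bar_sign ht
  obtain ⟨x, y⟩ := w
  have hw' : x ^ (n + 1) - y ^ (n + 1) = 1 := by simpa [sph] using hw
  have hxy := hw'
  rw [hn.pow_succ, hn.pow_succ] at hxy
  rw [hn.pow_succ] at hz
  have hmem : ∀ a c : F, (a, c) ∈ ((sph n F).filter fun v => (x, y) ∈ nonF n (umat n v t) z) ↔
      a * hn.bar a - c * hn.bar c = 1 ∧ a * x + t * hn.bar c * y = z * x ∧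
        c * x + t * hn.bar a * y = z * y := by
    intro a c
    simp [sph, nonF, umat, hw', ← hn.bar_apply, ← hn.pow_succ]
  rw [Finset.card_eq_one]
  refine ⟨(z * (x * hn.bar x) - t * hn.bar z * (y * hn.bar y),
    z * y * hn.bar x - t * hn.bar z * y * hn.bar x), ?_⟩
  ext ⟨a, c⟩
  rw [hmem, Finset.mem_singleton, Prod.mk.injEq]
  constructor
  · rintro ⟨_, e2, e3⟩
    have b2 := congrArg hn.bar e2
    have b3 := congrArg hn.bar e3
    simp only [map_add, map_mul, hn.bar_bar, htb] at b2 b3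
    constructor
    · linear_combination (-a) * hxy + hn.bar x * e2 - t * y * b3 + a * y * hn.bar y * htt
    · linear_combination (-c) * hxy + hn.bar x * e3 - t * y * b2 + c * y * hn.bar y * htt
  · rintro ⟨rfl, rfl⟩
    simp only [map_sub, map_mul, hn.bar_bar, htb]
    refine ⟨?_, ?_, ?_⟩
    · linear_combination (x * hn.bar x - y * hn.bar y + 1) * hxy + (x * hn.bar x - y * hn.bar y) ^ 2 * (hz) + ((x * hn.bar x - y * hn.bar y)*y*hn.bar y*z*hn.bar z) * htt * (-1)
    · linear_combination z * x * hxy - z * x * y * hn.bar y * htt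
    · linear_combination z * y * hxy - z * y ^ 2 * hn.bar y * htt

/-- Double counting of pairs of a unitary matrix of determinant `t` and a fixed isotropic point. -/
lemma sum_iso (hn : Herm n F) {t : F} (ht : t = 1 ∨ t = -1) :
    ∑ v ∈ sph n F, (isoF n (umat n v t)).card = (n + 1) * (n * (n - 1)) := by
  have h := Finset.sum_card_bipartiteAbove_eq_sum_card_bipartiteBelow (s := sph n F)
    (t := Finset.univ.filter fun y : F => y ^ (n + 1) = 1) (fun v y => y ∈ isoF n (umat n v t))
  have h1 : ∀ v, (Finset.univ.filter fun y : F => y ^ (n + 1) = 1).bipartiteAbove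
      (fun v y => y ∈ isoF n (umat n v t)) v = isoF n (umat n v t) := by
    intro v
    ext y
    simp only [Finset.mem_bipartiteAbove, Finset.mem_filter, Finset.mem_univ, true_and]
    simp only [isoF, Finset.mem_filter]
    tauto
  simp only [h1] at h
  rw [h, Finset.sum_congr rfl (g := fun _ => n * (n - 1)), Finset.sum_const, hn.card_norm 1 one_ne_zero (map_one _),
    smul_eq_mul]
  intro y hy
  exact card_fix_iso hn ht (Finset.mem_filter.1 hy).2

/-- Double counting of pairs of a unitary matrix of determinant `t` and a norm `1` eigenvector with
eigenvalue `z`. -/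
lemma sum_non (hn : Herm n F) {t : F} (ht : t = 1 ∨ t = -1) {z : F} (hz : z ^ (n + 1) = 1) :
    ∑ v ∈ sph n F, (nonF n (umat n v t) z).card = (n + 1) * (n * (n - 1)) := by
  have h := Finset.sum_card_bipartiteAbove_eq_sum_card_bipartiteBelow (s := sph n F)
    (t := sph n F) (fun v w => w ∈ nonF n (umat n v t) z)
  have h1 : ∀ v, (sph n F).bipartiteAbove
      (fun v w => w ∈ nonF n (umat n v t) z) v = nonF n (umat n v t) z := by
    intro v
    ext y
    simp only [Finset.mem_bipartiteAbove]
    simp only [nonF, sph, Finset.mem_filter]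
    tauto
  simp only [h1] at h
  rw [h, Finset.sum_congr rfl (g := fun _ => 1), Finset.sum_const, smul_eq_mul, mul_one, sph_card hn]
  intro w hw
  exact card_fix_non hn ht hz hw

end

/-! ### Comparing two unitary representations -/

/-- The centralizer of a nonscalar two-by-two matrix is commutative. -/
lemma comm_of_comm {F : Type*} [Field F] {M A B : Matrix (Fin 2) (Fin 2) F} (hM : ¬ IsScal M)
    (hA : A * M = M * A) (hB : B * M = M * B) : A * B = B * A := by
  have eA (i j) := congrFun (congrFun hA i) j
  have eB (i j) := congrFun (congrFun hB i) j
  have a00 := eA 0 0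
  have a01 := eA 0 1
  have a10 := eA 1 0
  have b00 := eB 0 0
  have b01 := eB 0 1
  have b10 := eB 1 0
  simp only [Matrix.mul_apply, Fin.sum_univ_two] at a00 a01 a10 b00 b01 b10
  -- the vectors `(X₀₁, X₁₀, X₀₀ - X₁₁)` of two commuting matrices are parallel
  have key : ∀ u v : F, u ≠ 0 → u * v = 0 → v = 0 := fun u v hu h =>
    (mul_eq_zero.1 h).resolve_left hu
  have c1 : A 0 1 * B 1 0 - B 0 1 * A 1 0 = 0 := by
    by_contra h
    apply hM
    refine ⟨?_, ?_, ?_⟩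
    · exact key _ _ h (by grind)
    · exact key _ _ h (by grind)
    · exact sub_eq_zero.1 (key _ _ h (by grind))
  have c2 : A 0 1 * (B 0 0 - B 1 1) - B 0 1 * (A 0 0 - A 1 1) = 0 := by
    by_contra h
    apply hM
    refine ⟨?_, ?_, ?_⟩
    · exact key _ _ h (by grind)
    · exact key _ _ h (by grind)
    · exact sub_eq_zero.1 (key _ _ h (by grind))
  have c3 : A 1 0 * (B 0 0 - B 1 1) - B 1 0 * (A 0 0 - A 1 1) = 0 := by
    by_contra h
    apply hM
    refine ⟨?_, ?_, ?_⟩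
    · exact key _ _ h (by grind)
    · exact key _ _ h (by grind)
    · exact sub_eq_zero.1 (key _ _ h (by grind))
  ext i j
  fin_cases i <;> fin_cases j <;> simp [Matrix.mul_apply, Fin.sum_univ_two] <;> grind

/-- For a matrix with distinct eigenvalues `l`, `m` and determinant `±1`, and `e` odd, the number
of eigenvalues with `e`-th power `1` is determined by which powers of the matrix are `1`. -/
lemma count_eig {F : Type*} [Field F] [DecidableEq F] (h2 : (2 : F) ≠ 0)
    {M : Matrix (Fin 2) (Fin 2) F} {l m : F} (h : HasEig M l m) (hM : ¬ IsScal M) (hlm : l ≠ m)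
    (hl : l ≠ 0) (hm : m ≠ 0) {e : ℕ} (he : Odd e) :
    (l * m = 1 → (if l ^ e = 1 then 1 else 0) + (if m ^ e = 1 then 1 else 0) =
      if M ^ e = 1 then 2 else 0) ∧
    (l * m = -1 → (if l ^ e = 1 then 1 else 0) + (if m ^ e = 1 then 1 else 0) =
      if M ^ (2 * e) = 1 then 1 else 0) := by
  have hiff : ∀ k, M ^ k = 1 ↔ l ^ k = 1 ∧ m ^ k = 1 := fun k =>
    ⟨fun hk => ⟨h.pow_eq_one hM hl k hk, h.symm.pow_eq_one hM hm k hk⟩,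
      fun hk => h.pow_one_of_distinct hlm k hk.1 hk.2⟩
  refine ⟨fun h1 => ?_, fun h1 => ?_⟩
  · have hp : l ^ e * m ^ e = 1 := by rw [← mul_pow, h1, one_pow]
    simp only [hiff]
    by_cases a : l ^ e = 1
    · rw [a, one_mul] at hp; simp [a, hp]
    · have b : m ^ e ≠ 1 := fun b => a (by rw [b, mul_one] at hp; exact hp)
      simp [a, b]
  · have hp : l ^ e * m ^ e = -1 := by rw [← mul_pow, h1, he.neg_one_pow]
    have hiff2 : M ^ (2 * e) = 1 ↔ (l ^ e) ^ 2 = 1 ∧ (m ^ e) ^ 2 = 1 := by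
      rw [hiff, mul_comm, pow_mul, pow_mul]
    have hneg : (-1 : F) ≠ 1 := fun h => h2 (by linear_combination -h)
    simp only [hiff2]
    by_cases a : l ^ e = 1
    · rw [a, one_mul] at hp
      simp [a, hp, hneg]
    · by_cases b : m ^ e = 1
      · rw [b, mul_one] at hp
        simp [b, hp, hneg]
      · have : ¬ ((l ^ e) ^ 2 = 1 ∧ (m ^ e) ^ 2 = 1) := by
          rintro ⟨x, y⟩
          have x' : l ^ e = -1 := (sq_eq_one_iff.1 x).resolve_left a
          have y' : m ^ e = -1 := (sq_eq_one_iff.1 y).resolve_left b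
          rw [x', y'] at hp
          exact h2 (by linear_combination hp)
        rw [if_neg a, if_neg b, if_neg this]

/-! ### A group with two unitary representations -/

/-- A group `H` with two faithful representations by two-by-two matrices: `ρ` into the unitary
group over the field `F` with `q ^ 2` elements, and `φ` onto the group of unitary matrices of
determinant `±1` over the field `E` with `r ^ 2` elements. -/
structure Pair (p q r : ℕ) (F E H : Type*) [Field F] [Fintype F] [Field E] [Fintype E] [Group H]
    (ρ : H →* Matrix (Fin 2) (Fin 2) F) (φ : H →* Matrix (Fin 2) (Fin 2) E) : Prop where
  hF : Herm q F
  hE : Herm r E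
  pp : p.Prime
  cF : CharP F p
  cE : CharP E p
  pr : p ∣ r
  r4 : r % 4 = 1
  q4 : q % 4 = 1
  sub : r - 1 ∣ q - 1
  add : r + 1 ∣ q + 1
  injρ : Function.Injective ρ
  injφ : Function.Injective φ
  uρ : ∀ h, ∃ a c t, IsU q (ρ h) a c t
  uφ : ∀ h, ∃ a c t, (t = 1 ∨ t = -1) ∧ IsU r (φ h) a c t
  surj : ∀ a c t : E, (t = 1 ∨ t = -1) → a ^ (r + 1) - c ^ (r + 1) = 1 →
    ∃ h, φ h = !![a, t * c ^ r; c, t * a ^ r]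

namespace Pair

variable {p q r : ℕ} {F E H : Type*} [Field F] [Fintype F] [Field E] [Fintype E] [Group H]
    {ρ : H →* Matrix (Fin 2) (Fin 2) F} {φ : H →* Matrix (Fin 2) (Fin 2) E}

lemma ρ_pow (P : Pair p q r F E H ρ φ) (h : H) (k : ℕ) : ρ h ^ k = 1 ↔ h ^ k = 1 := by
  rw [← map_pow, ← map_one ρ]; exact P.injρ.eq_iff

lemma φ_pow (P : Pair p q r F E H ρ φ) (h : H) (k : ℕ) : φ h ^ k = 1 ↔ h ^ k = 1 := by
  rw [← map_pow, ← map_one φ]; exact P.injφ.eq_iff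

/-- An element of norm `1` of `E` has no square equal to `-1`, since `r + 1 ≡ 2 (mod 4)`. -/
lemma sq_ne (P : Pair p q r F E H ρ φ) {a : E} (ha : a ^ (r + 1) = 1) : a ^ 2 ≠ -1 := by
  intro h
  have hr := P.r4
  rw [show r + 1 = 2 * (2 * (r / 4) + 1) by omega, pow_mul, h, Odd.neg_one_pow ⟨_, rfl⟩] at ha
  exact P.hE.two_ne (by linear_combination -ha)

/-- The elements of `H` mapped by `φ` to `diag(1, -1)` and to an antidiagonal matrix. -/
lemma exists_sj (P : Pair p q r F E H ρ φ) : ∃ s j : H, ∃ d : E, d ≠ 0 ∧ d ^ (r + 1) = -1 ∧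
    φ s = !![1, 0; 0, -1] ∧ φ j = !![0, d ^ r; d, 0] := by
  classical
  obtain ⟨d, hd⟩ : ∃ d : E, d ^ (r + 1) = -1 := by
    have := P.hE.card_norm (-1) (by simp) (by simp)
    have h0 : 0 < (Finset.univ.filter (fun x : E => x ^ (r + 1) = -1)).card := by omega
    obtain ⟨d, hd⟩ := Finset.card_pos.1 h0
    exact ⟨d, (Finset.mem_filter.1 hd).2⟩
  have hr := P.hE.pos.ne'
  obtain ⟨s, hs⟩ := P.surj 1 0 (-1) (Or.inr rfl) (by simp)
  obtain ⟨j, hj⟩ := P.surj 0 d 1 (Or.inl rfl) (by simp [hd])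
  refine ⟨s, j, d, ?_, hd, ?_, ?_⟩
  · rintro rfl; simp at hd
  · rw [hs]; simp [hr]
  · rw [hj]; simp [hr]

/-- A matrix commuting with the two matrices above is scalar. -/
lemma scal_of_comm (P : Pair p q r F E H ρ φ) {d : E} (hd : d ≠ 0) {M : Matrix (Fin 2) (Fin 2) E}
    (h1 : M * !![1, 0; 0, -1] = !![1, 0; 0, -1] * M)
    (h2 : M * !![0, d ^ r; d, 0] = !![0, d ^ r; d, 0] * M) : IsScal M := by
  have two := P.hE.two_ne
  have e1 := congrFun (congrFun h1 0) 1
  have e2 := congrFun (congrFun h1 1) 0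
  have e3 := congrFun (congrFun h2 0) 1
  simp [Matrix.mul_apply, Fin.sum_univ_two] at e1 e2 e3
  refine ⟨?_, ?_, ?_⟩
  · have : 2 * M 0 1 = 0 := by linear_combination -e1
    simpa [two] using this
  · have : 2 * M 1 0 = 0 := by linear_combination e2
    simpa [two] using this
  · have hdr : d ^ r ≠ 0 := pow_ne_zero _ hd
    exact mul_right_cancel₀ hdr (by rw [e3, mul_comm])

lemma scal_comm {K : Type*} [Field K] {M N : Matrix (Fin 2) (Fin 2) K} (h : IsScal M) :
    M * N = N * M := by
  obtain ⟨h1, h2, h3⟩ := h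
  ext i j
  fin_cases i <;> fin_cases j <;> simp [Matrix.mul_apply, Fin.sum_univ_two, h1, h2, h3] <;> ring

/-- The central involution of `H` acts as `-1` in both representations, and is the only
nontrivial element represented by a scalar matrix in one (or both) of them. -/
lemma exists_z (P : Pair p q r F E H ρ φ) : ∃ z : H, z ≠ 1 ∧ φ z = -1 ∧ ρ z = -1 ∧
    (∀ h, IsScal (φ h) → h = 1 ∨ h = z) ∧ (∀ h, IsScal (ρ h) → h = 1 ∨ h = z) := by
  obtain ⟨s, j, d, hd, hdn, hs, hj⟩ := P.exists_sj
  have two := P.hE.two_ne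
  have twoF := P.hF.two_ne
  have hr := P.hE.pos.ne'
  obtain ⟨z, hz⟩ := P.surj (-1) 0 1 (Or.inl rfl) (by simp [P.hE.odd.add_one.neg_one_pow])
  have hz : φ z = -1 := by
    rw [hz]; ext i j; fin_cases i <;> fin_cases j <;> simp [hr, P.hE.odd.neg_one_pow]
  have hz1 : z ≠ 1 := by
    rintro rfl
    rw [map_one] at hz
    have := congrFun (congrFun hz 0) 0
    simp at this
    exact two (by linear_combination this)
  have hzc : ∀ g, g * z = z * g := fun g => P.injφ (by simp [hz])
  have hz2 : z * z = 1 := P.injφ (by simp [hz])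
  have hscz : IsScal (ρ z) := by
    by_contra hns
    have hc := comm_of_comm (A := ρ s) (B := ρ j) hns (by rw [← map_mul, hzc, map_mul])
      (by rw [← map_mul, hzc, map_mul])
    rw [← map_mul, ← map_mul] at hc
    have hc' := congrArg φ (P.injρ hc)
    rw [map_mul, map_mul, hs, hj] at hc'
    have := congrFun (congrFun hc' 1) 0
    simp [Matrix.mul_apply, Fin.sum_univ_two] at this
    have : 2 * d = 0 := by linear_combination -this
    simp [two, hd] at this
  have hρz : ρ z = -1 := by
    have hsq : ρ z * ρ z = 1 := by rw [← map_mul, hz2, map_one]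
    have hne : ρ z ≠ 1 := fun h => hz1 (P.injρ (by rw [h, map_one]))
    obtain ⟨h1, h2, h3⟩ := hscz
    have e := congrFun (congrFun hsq 0) 0
    simp [Matrix.mul_apply, Fin.sum_univ_two, h1] at e
    rcases mul_self_eq_one_iff.1 e with e | e
    · exact (hne (by ext i j; fin_cases i <;> fin_cases j <;> simp [h1, h2, ← h3, e])).elim
    · ext i j; fin_cases i <;> fin_cases j <;> simp [h1, h2, ← h3, e]
  have hφ : ∀ h, IsScal (φ h) → h = 1 ∨ h = z := by
    intro h hh
    obtain ⟨a, c, t, ht, h1, h2, h3⟩ := P.uφ h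
    rw [h3] at hh
    obtain ⟨-, e2, e3⟩ := hh
    simp at e2 e3
    subst e2
    simp at h1
    have hat : a ^ 2 = t := by
      have : a ^ 2 = t * a ^ (r + 1) := by rw [_root_.pow_succ]; linear_combination a * e3
      rw [this, h1, mul_one]
    have ht1 : t = 1 := ht.resolve_right fun h => P.sq_ne h1 (hat.trans h)
    subst ht1
    rcases sq_eq_one_iff.1 hat with rfl | rfl
    · left; apply P.injφ; rw [h3, map_one]
      ext i j; fin_cases i <;> fin_cases j <;> simp [hr]
    · right; apply P.injφ; rw [h3, hz]
      ext i j; fin_cases i <;> fin_cases j <;> simp [hr, P.hE.odd.neg_one_pow]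
  refine ⟨z, hz1, hz, hρz, hφ, ?_⟩
  intro h hh
  have hcen : ∀ g, h * g = g * h := fun g => P.injρ (by
    rw [map_mul, map_mul]; exact scal_comm hh)
  apply hφ
  apply P.scal_of_comm hd
  · rw [← hs, ← map_mul, hcen, map_mul]
  · rw [← hj, ← map_mul, hcen, map_mul]

/-- If `φ h` has an eigenvector of norm `1`, then `h` is conjugate in `H` to `t h⁻¹`, where
`t = ±1` is the determinant of `φ h`: take the matrix swapping the two eigenlines. -/
lemma exists_swap (P : Pair p q r F E H ρ φ) {h : H} {a c t x y l : E} (ht : t = 1 ∨ t = -1)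
    (hM : φ h = !![a, t * c ^ r; c, t * a ^ r])
    (hl : l ^ (r + 1) = 1) (hxy : x ^ (r + 1) - y ^ (r + 1) = 1)
    (e2 : a * x + t * c ^ r * y = l * x) (e3 : c * x + t * a ^ r * y = l * y) :
    ∃ g, φ (h * g * h) = t • φ g := by
  obtain ⟨-, -, d, hd, hdn, -, -⟩ := P.exists_sj
  have hn := P.hE
  have htt := sign_sq ht
  have htb := hn.bar_sign ht
  rw [hn.pow_succ] at hdn hl
  rw [hn.pow_succ, hn.pow_succ] at hxy
  rw [← hn.bar_apply] at e2 e3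
  have b2 := congrArg hn.bar e2
  have b3 := congrArg hn.bar e3
  simp only [map_add, map_mul, hn.bar_bar, htb] at b2 b3
  have ha : a = l * (x * hn.bar x) - t * hn.bar l * (y * hn.bar y) := by
    linear_combination (-a) * hxy + hn.bar x * e2 - t * y * b3 + a * y * hn.bar y * htt
  have hc : c = l * y * hn.bar x - t * hn.bar l * y * hn.bar x := by
    linear_combination (-c) * hxy + hn.bar x * e3 - t * y * b2 + c * y * hn.bar y * htt
  obtain ⟨g, hg⟩ := P.surj (hn.bar y * hn.bar x * d - x * y * hn.bar d)
    (hn.bar x ^ 2 * d - y ^ 2 * hn.bar d) 1 (Or.inl rfl) (by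
      rw [hn.pow_succ, hn.pow_succ]
      simp only [map_sub, map_mul, map_pow, hn.bar_bar]
      linear_combination (-(d * hn.bar d)) * (x * hn.bar x - y * hn.bar y + 1) * hxy - hdn)
  refine ⟨g, ?_⟩
  rw [map_mul, map_mul, hM, hg]
  have hN : (x * hn.bar x - y * hn.bar y) ^ 2 * (l * hn.bar l) = 1 := by rw [hxy, hl]; ring
  simp only [← hn.bar_apply]
  rw [ha, hc]
  simp only [map_sub, map_mul, map_pow, hn.bar_bar, htb]
  clear * - hN ht
  ext i j
  rcases ht with rfl | rfl <;> fin_cases i <;> fin_cases j <;>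
    simp [Matrix.mul_apply, Fin.sum_univ_two]
  · linear_combination (hn.bar y * hn.bar x * d - x * y * hn.bar d) * hN
  · linear_combination (x ^ 2 * hn.bar d - hn.bar y ^ 2 * d) * hN
  · linear_combination (hn.bar x ^ 2 * d - y ^ 2 * hn.bar d) * hN
  · linear_combination (y * x * hn.bar d - hn.bar x * hn.bar y * d) * hN
  · linear_combination -(hn.bar y * hn.bar x * d - x * y * hn.bar d) * hN
  · linear_combination -(x ^ 2 * hn.bar d - hn.bar y ^ 2 * d) * hN
  · linear_combination -(hn.bar x ^ 2 * d - y ^ 2 * hn.bar d) * hN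
  · linear_combination -(y * x * hn.bar d - hn.bar x * hn.bar y * d) * hN

end Pair

namespace Pair

variable {p q r : ℕ} {F E H : Type*} [Field F] [Fintype F] [Field E] [Fintype E] [Group H]
    {ρ : H →* Matrix (Fin 2) (Fin 2) F} {φ : H →* Matrix (Fin 2) (Fin 2) E}

/-- If `φ h` is nonscalar and diagonalizable in an orthogonal basis, with eigenvalues `l'`, `m'`,
then `ρ h` and `φ h` have the same determinant `±1`. Indeed `ρ h` is conjugate to `t (ρ h)⁻¹`,
so that either its determinant is `t` or its trace is `0`; in the latter case `h ^ 2 = ±1`. -/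
lemma det_eq (P : Pair p q r F E H ρ φ) {h : H} {a c t x y l' m' : E} {l m : F}
    (ht : t = 1 ∨ t = -1)
    (hM : φ h = !![a, t * c ^ r; c, t * a ^ r]) (hs : ¬ IsScal (φ h))
    (hl : l' ^ (r + 1) = 1) (hxy : x ^ (r + 1) - y ^ (r + 1) = 1)
    (e2 : a * x + t * c ^ r * y = l' * x) (e3 : c * x + t * a ^ r * y = l' * y)
    (hE : HasEig (φ h) l' m') (hlm' : l' * m' = t) (hne' : l' ≠ m')
    (hF : HasEig (ρ h) l m) :
    (t = 1 → l * m = 1) ∧ (t = -1 → l * m = -1) := by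
  obtain ⟨z, hz1, hφz, hρz, -, -⟩ := P.exists_z
  have twoF := P.hF.two_ne
  have twoE := P.hE.two_ne
  have hl'0 : l' ≠ 0 := by rintro rfl; simp at hl
  have hm'0 : m' ≠ 0 := by
    rintro rfl; rcases ht with rfl | rfl <;> simp at hlm'
  obtain ⟨g, hg⟩ := P.exists_swap ht hM hl hxy e2 e3
  -- the signs transported from `E` to `F`
  obtain ⟨t', ht', h11, hmm, hg'⟩ : ∃ t' : F, (t' = 1 ∨ t' = -1) ∧ (t = 1 → t' = 1) ∧
      (t = -1 → t' = -1) ∧ ρ (h * g * h) = t' • ρ g := by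
    have hE1 : (1 : E) ≠ -1 := fun h => twoE (by linear_combination h)
    rcases ht with rfl | rfl
    · refine ⟨1, Or.inl rfl, fun _ => rfl, fun h => (hE1 h).elim, ?_⟩
      rw [one_smul] at hg ⊢
      rw [P.injφ hg]
    · refine ⟨-1, Or.inr rfl, fun h => (hE1 h.symm).elim, fun _ => rfl, ?_⟩
      have : φ (h * g * h) = φ (z * g) := by rw [hg, map_mul, hφz]; simp
      rw [P.injφ this, map_mul, hρz]; simp
  have hkey : l * m = t' := by
    have htt := sign_sq ht'
    -- `ρ h` is conjugate to `t' (ρ h)⁻¹`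
    have hconj : ρ h = t' • (ρ g * ρ h⁻¹ * ρ g⁻¹) := by
      have : ρ h = ρ (h * g * h) * ρ h⁻¹ * ρ g⁻¹ := by
        simp only [← map_mul]; congr 1; group
      rw [this, hg', Matrix.smul_mul, Matrix.smul_mul]
    have htr : (ρ h).trace = t' * (ρ h⁻¹).trace := by
      have := congrArg Matrix.trace hconj
      rw [Matrix.trace_smul, Matrix.trace_mul_cycle, ← map_mul, inv_mul_cancel, map_one,
        one_mul] at this
      exact this
    have hdet : (ρ h).det = l * m := by rw [Matrix.det_fin_two]; exact hF.2
    have htrF : (ρ h).trace = l + m := by rw [Matrix.trace_fin_two]; exact hF.1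
    have hinv : (ρ h).det * (ρ h⁻¹).trace = (ρ h).trace := by
      have h1 : ρ h * ρ h⁻¹ = 1 := by rw [← map_mul, mul_inv_cancel, map_one]
      have h2 : (ρ h).adjugate = (ρ h).det • ρ h⁻¹ := by
        have := congrArg (fun X => (ρ h).adjugate * X) h1
        simp only [← mul_assoc, Matrix.adjugate_mul, mul_one, Matrix.smul_mul, one_mul] at this
        exact this.symm
      have h3 := congrArg Matrix.trace h2
      rw [Matrix.trace_smul, Matrix.adjugate_fin_two, Matrix.trace_fin_two] at h3
      rw [← smul_eq_mul, ← h3, Matrix.trace_fin_two]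
      simp [add_comm]
    by_cases h0 : l + m = 0
    · have hdsq : (l * m) ^ 2 = 1 := by
        have h1 := congrArg Matrix.det hg'
        rw [map_mul, map_mul, Matrix.det_mul, Matrix.det_mul, Matrix.det_smul, Fintype.card_fin,
          hdet, sq t', htt, one_mul] at h1
        have hg0 : (ρ g).det ≠ 0 := by
          intro h0
          have := congrArg Matrix.det (show ρ g * ρ g⁻¹ = 1 by rw [← map_mul]; simp)
          rw [Matrix.det_mul, h0] at this; simp at this
        exact mul_right_cancel₀ hg0 (by linear_combination h1)
      have hml : m = -l := by linear_combination h0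
      have hne1 : (-1 : F) ≠ 1 := fun h => twoF (by linear_combination -h)
      rcases sq_eq_one_iff.1 hdsq with hd | hd
      · exfalso
        have h2 : ρ (h * h) = ρ z := by
          rw [map_mul, hF.sq, h0, hd, hρz]; simp
        have h3 : φ h * φ h = -1 := by rw [← map_mul, P.injρ h2, hφz]
        have h4 : φ h ^ 4 = 1 := by rw [show 4 = 2 * 2 from rfl, pow_mul, sq, sq, h3]; simp
        have h5 := hE.pow_eq_one hs hl'0 4 h4
        have h6 : l' ^ 2 = 1 := by
          rw [show 4 = 2 * 2 from rfl, pow_mul] at h5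
          exact (sq_eq_one_iff.1 h5).resolve_right (P.sq_ne hl)
        have h7 := hE.symm.pow_eq_one hs hm'0 4 h4
        have h8 : m' ^ 2 = 1 := by
          have : (l' * m') ^ 2 = 1 := by rw [hlm', sq, sign_sq ht]
          rw [mul_pow, h6, one_mul] at this; exact this
        have h9 := hE.pow_one_of_distinct hne' 2 h6 h8
        rw [sq, h3] at h9
        have := congrFun (congrFun h9 0) 0
        simp at this
        exact twoE (by linear_combination -this)
      · rw [hd]
        have h2 : h ^ 2 = 1 := by
          rw [← P.ρ_pow, sq, hF.sq, h0, hd]; simp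
        have h3 := (P.φ_pow h 2).2 h2
        have h6 := hE.pow_eq_one hs hl'0 2 h3
        have h8 := hE.symm.pow_eq_one hs hm'0 2 h3
        have ht1 : t = -1 := by
          rcases sq_eq_one_iff.1 h6 with rfl | rfl <;> rcases sq_eq_one_iff.1 h8 with rfl | rfl
          · exact (hne' rfl).elim
          · simpa using hlm'.symm
          · simpa using hlm'.symm
          · exact (hne' rfl).elim
        rw [hmm ht1]
    · rw [hdet, htrF] at hinv
      rw [htrF] at htr
      exact mul_right_cancel₀ h0 (by linear_combination l * m * htr + t' * hinv)
  exact ⟨fun h => hkey.trans (h11 h), fun h => hkey.trans (hmm h)⟩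

/-- For an element acting by nonscalar matrices, the fixed isotropic points are equally many in
both representations, and the numbers of eigenvectors of norm `1` with eigenvalues in the groups
of `w`-th and `gcd (r+1) w`-th roots of unity are proportional. -/
theorem compare [DecidableEq F] [DecidableEq E] (P : Pair p q r F E H ρ φ) {h : H} {w : ℕ}
    (hw : Odd w) (hsφ : ¬ IsScal (φ h)) (hsρ : ¬ IsScal (ρ h)) :
    (isoF q (ρ h)).card = (isoF r (φ h)).card ∧
    (r + 1) * ∑ ζ ∈ Finset.univ.filter (fun ζ : F => ζ ^ w = 1), (nonF q (ρ h) ζ).card =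
    (q + 1) * ∑ ζ ∈ Finset.univ.filter (fun ζ : E => ζ ^ (Nat.gcd (r + 1) w) = 1),
      (nonF r (φ h) ζ).card := by
  have twoF := P.hF.two_ne
  have twoE := P.hE.two_ne
  have := P.cF
  have := P.cE
  have hpp := P.pp
  have hr4 := P.r4
  have hq4 := P.q4
  have hprime := P.pp
  have hpr : ¬ p ∣ r + 1 := fun hd => P.pp.one_lt.ne' (Nat.dvd_one.1 ((Nat.dvd_add_right P.pr).1 hd))
  have hp2 : ¬ p ∣ 2 := fun hd => twoF (by
    have := (CharP.cast_eq_zero_iff F p 2).2 hd; exact_mod_cast this)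
  have hpr2 : ¬ p ∣ 2 * (r - 1) := by
    intro hd
    rcases P.pp.dvd_mul.1 hd with hd | hd
    · exact hp2 hd
    · have h1 : p ∣ (r - 1) + 1 := by rw [Nat.sub_add_cancel P.hE.pos]; exact P.pr
      exact P.pp.one_lt.ne' (Nat.dvd_one.1 ((Nat.dvd_add_right hd).1 h1))
  obtain ⟨a', c', t, ht, hU'⟩ := P.uφ h
  obtain ⟨a, c, τ, hU⟩ := P.uρ h
  obtain ⟨l', m', hE, hlm', hl'0, hm'0, T'⟩ := unitary_type P.hE hU' hsφ
  obtain ⟨l, m, hF, hlm, hl0, hm0, T⟩ := unitary_type P.hF hU hsρ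
  rcases T' with ⟨heq', hl', hi', hn'⟩ | ⟨hne', hl', hm', hi', hn'⟩ | ⟨hne', hl', hlt', hmt', hi', hn'⟩
  · -- a double eigenvalue: `h ^ (2 p) = 1` and `h ^ 2 ≠ 1`
    subst heq'
    have ht1 : t = 1 := ht.resolve_right fun h1 => P.sq_ne hl' (by rw [sq, hlm', h1])
    have hsq : l' ^ 2 = 1 := by rw [sq, hlm', ht1]
    have h2p : h ^ (2 * p) = 1 := by
      rw [← P.φ_pow]
      apply hE.pow_one_of_double _ (by have := hpp.pos; omega)
      · rw [pow_mul, hsq, one_pow]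
      · push_cast; simp
    have hn2 : h ^ 2 ≠ 1 := by
      intro h2
      have := hE.double_cast hsφ hl'0 2 ((P.φ_pow h 2).2 h2)
      exact twoE (by exact_mod_cast this)
    have hfrob : ∀ x : F, x ^ (2 * p) = 1 → x ^ 2 = 1 := by
      intro x hx
      have : Fact p.Prime := ⟨hpp⟩
      rw [pow_mul] at hx
      exact frobenius_inj F p (by simpa [frobenius_def] using hx)
    have hl2 := hfrob l (hF.pow_eq_one hsρ hl0 _ ((P.ρ_pow h _).2 h2p))
    have hm2 := hfrob m (hF.symm.pow_eq_one hsρ hm0 _ ((P.ρ_pow h _).2 h2p))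
    have heq : l = m := by
      by_contra hne
      exact hn2 ((P.ρ_pow h 2).1 (hF.pow_one_of_distinct hne 2 hl2 hm2))
    rcases T with ⟨-, -, hi, hn⟩ | ⟨hne, -⟩ | ⟨hne, -⟩
    · rw [hi, hi']; simp [hn, hn']
    · exact (hne heq).elim
    · exact (hne heq).elim
  · -- two nonisotropic eigenlines: `h ^ (r+1) = 1`
    have hr1 : h ^ (r + 1) = 1 := (P.φ_pow h _).1 (hE.pow_one_of_distinct hne' _ hl' hm')
    have hR := (P.ρ_pow h _).2 hr1
    have hlr := hF.pow_eq_one hsρ hl0 _ hR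
    have hmr := hF.symm.pow_eq_one hsρ hm0 _ hR
    have hne : l ≠ m := by
      rintro rfl
      exact hpr ((CharP.cast_eq_zero_iff F p _).1 (hF.double_cast hsρ hl0 _ hR))
    have hlq : l ^ (q + 1) = 1 := by
      obtain ⟨j, hj⟩ := P.add
      rw [hj, pow_mul, hlr, one_pow]
    rcases T with ⟨heq, -⟩ | ⟨-, -, -, hi, hn⟩ | ⟨-, hl, -⟩
    · exact (hne heq).elim
    · refine ⟨by rw [hi, hi'], ?_⟩
      simp only [hn, hn']
      rw [← Finset.mul_sum, ← Finset.mul_sum, Finset.sum_add_distrib, Finset.sum_add_distrib]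
      simp only [Finset.sum_ite_eq', Finset.mem_filter, Finset.mem_univ, true_and]
      have hgcd : ∀ x : F, x ^ (r + 1) = 1 → (x ^ w = 1 ↔ x ^ (Nat.gcd (r + 1) w) = 1) := by
        intro x hx
        constructor
        · intro hxw; exact pow_gcd_eq_one.2 ⟨hx, hxw⟩
        · intro hxe
          obtain ⟨j, hj⟩ := Nat.gcd_dvd_right (r + 1) w
          rw [hj, pow_mul, hxe, one_pow]
      simp only [hgcd l hlr, hgcd m hmr]
      have he : Odd (Nat.gcd (r + 1) w) := Odd.of_dvd_nat hw (Nat.gcd_dvd_right _ _)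
      obtain ⟨v, hv⟩ : (nonF r (φ h) l').Nonempty := by
        rw [← Finset.card_pos, hn']; simp [hne']
      obtain ⟨-, -, hφh⟩ := hU'
      have hv' := (Finset.mem_filter.1 hv).2
      rw [hφh] at hv'
      obtain ⟨v1, v2, v3⟩ := hv'
      obtain ⟨d1, d2⟩ := P.det_eq ht hφh hsφ hl' v1 (by simpa using v2) (by simpa using v3) hE hlm'
        hne' hF
      obtain ⟨c1, c2⟩ := count_eig twoF hF hsρ hne hl0 hm0 he
      obtain ⟨c1', c2'⟩ := count_eig twoE hE hsφ hne' hl'0 hm'0 he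
      have hcount : (if l ^ (Nat.gcd (r + 1) w) = 1 then 1 else 0) +
          (if m ^ (Nat.gcd (r + 1) w) = 1 then 1 else 0) =
          (if l' ^ (Nat.gcd (r + 1) w) = 1 then 1 else 0) +
          (if m' ^ (Nat.gcd (r + 1) w) = 1 then 1 else 0) := by
        rcases ht with h1 | h1
        · rw [c1 (d1 h1), c1' (hlm'.trans h1)]
          exact if_congr ((P.ρ_pow h _).trans (P.φ_pow h _).symm) rfl rfl
        · rw [c2 (d2 h1), c2' (hlm'.trans h1)]
          exact if_congr ((P.ρ_pow h _).trans (P.φ_pow h _).symm) rfl rfl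
      rw [hcount]; ring
    · exact (hl hlq).elim
  · -- two isotropic eigenlines: `h ^ (2 (r-1)) = 1` and `h ^ 2 ≠ 1`
    have hpow : ∀ x : E, x ≠ 0 → x = t * x ^ r → x ^ (2 * (r - 1)) = 1 := by
      intro x hx0 hx
      have h1 : t * x ^ (r - 1) = 1 := by
        have : x = t * x ^ (r - 1) * x := by
          rw [mul_assoc, ← _root_.pow_succ, Nat.sub_add_cancel P.hE.pos]; exact hx
        exact mul_right_cancel₀ hx0 (this.symm.trans (one_mul x).symm)
      have h2 : (t * x ^ (r - 1)) ^ 2 = 1 := by rw [h1, one_pow]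
      rw [mul_pow, sq t, sign_sq ht, one_mul, ← pow_mul, mul_comm] at h2
      exact h2
    have hh : h ^ (2 * (r - 1)) = 1 := (P.φ_pow h _).1
      (hE.pow_one_of_distinct hne' _ (hpow l' hl'0 hlt') (hpow m' hm'0 hmt'))
    have hn2 : h ^ 2 ≠ 1 := by
      intro h2
      apply hl'
      have := hE.pow_eq_one hsφ hl'0 2 ((P.φ_pow h 2).2 h2)
      rw [show r + 1 = 2 * ((r + 1) / 2) by omega, pow_mul, this, one_pow]
    have hR := (P.ρ_pow h _).2 hh
    have hlr := hF.pow_eq_one hsρ hl0 _ hR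
    have hmr := hF.symm.pow_eq_one hsρ hm0 _ hR
    have hne : l ≠ m := by
      rintro rfl
      exact hpr2 ((CharP.cast_eq_zero_iff F p _).1 (hF.double_cast hsρ hl0 _ hR))
    have hsq : ∀ x : F, x ^ (2 * (r - 1)) = 1 → x ^ (q + 1) = 1 → x ^ 2 = 1 := by
      intro x h1 h2
      obtain ⟨j, hj⟩ := P.sub
      have h3 : x ^ (2 * (q - 1)) = 1 := by
        rw [hj, ← mul_assoc, pow_mul, h1, one_pow]
      -- `2 (q+1) = 2 (q-1) + 4`, and `gcd (4, q+1) = 2`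
      have h4 : x ^ 4 = 1 := by
        have h5 : x ^ (2 * (q + 1)) = 1 := by rw [mul_comm, pow_mul, h2, one_pow]
        rw [show 2 * (q + 1) = 2 * (q - 1) + 4 by omega, pow_add, h3, one_mul] at h5
        exact h5
      rw [show q + 1 = 4 * (q / 4) + 2 by omega, pow_add, pow_mul, h4, one_pow, one_mul] at h2
      exact h2
    rcases T with ⟨heq, -⟩ | ⟨-, hl, hm, -⟩ | ⟨-, -, -, -, hi, hn⟩
    · exact (hne heq).elim
    · exact (hn2 ((P.ρ_pow h 2).1
        (hF.pow_one_of_distinct hne 2 (hsq l hlr hl) (hsq m hmr hm)))).elim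
    · rw [hi, hi']; simp [hn, hn']

end Pair

/-! ### Totals over the group -/

section
variable {F : Type*} [Field F] [Fintype F] [DecidableEq F] {n : ℕ}

lemma card_isoF_one (hn : Herm n F) : (isoF n (1 : Matrix (Fin 2) (Fin 2) F)).card = n + 1 := by
  rw [← hn.card_norm 1 one_ne_zero (map_one _)]; simp [isoF]

lemma card_isoF_neg_one (hn : Herm n F) :
    (isoF n (-1 : Matrix (Fin 2) (Fin 2) F)).card = n + 1 := by
  rw [← hn.card_norm 1 one_ne_zero (map_one _)]; simp [isoF]

/-- A vector of norm `1` is an eigenvector of the scalar matrix `x` exactly for the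
eigenvalue `x`. -/
lemma nonF_scalar (x z : F) : nonF n (x • (1 : Matrix (Fin 2) (Fin 2) F)) z =
    if z = x then sph n F else ∅ := by
  split_ifs with h
  · subst h; ext v; simp [nonF, sph]
  · ext v
    simp only [nonF, Finset.mem_filter, Finset.mem_univ, true_and, Finset.notMem_empty, iff_false]
    rintro ⟨h1, h2, h3⟩
    simp at h2 h3
    have e1 := h2.resolve_left (Ne.symm h)
    have e2 := h3.resolve_left (Ne.symm h)
    rw [e1, e2] at h1
    simp at h1

lemma sum_nonF_one {w : ℕ} (hn : Herm n F) :
    ∑ ζ ∈ Finset.univ.filter (fun ζ : F => ζ ^ w = 1), (nonF n (1 : Matrix (Fin 2) (Fin 2) F) ζ).card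
      = (n + 1) * (n * (n - 1)) := by
  have h := fun z : F => nonF_scalar (n := n) 1 z
  simp only [one_smul] at h
  simp only [h, apply_ite Finset.card, Finset.card_empty]
  rw [Finset.sum_ite_eq' _ (1 : F) (fun _ => (sph n F).card)]
  simp [sph_card hn]

lemma sum_nonF_neg_one {w : ℕ} (hw : Odd w) (hn : Herm n F) :
    ∑ ζ ∈ Finset.univ.filter (fun ζ : F => ζ ^ w = 1),
      (nonF n (-1 : Matrix (Fin 2) (Fin 2) F) ζ).card = 0 := by
  have h := fun z : F => nonF_scalar (n := n) (-1) z
  simp only [neg_smul, one_smul] at h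
  simp only [h, apply_ite Finset.card, Finset.card_empty]
  rw [Finset.sum_ite_eq' _ (-1 : F) (fun _ => (sph n F).card)]
  have : (-1 : F) ≠ 1 := fun h => hn.two_ne (by linear_combination -h)
  simp [hw.neg_one_pow, this]

end

lemma sum_add_of_eq_outside {H : Type*} [Fintype H] [DecidableEq H] (f g : H → ℕ) (s : Finset H)
    (hfg : ∀ h ∉ s, f h = g h) : ∑ h, f h + ∑ h ∈ s, g h = ∑ h, g h + ∑ h ∈ s, f h := by
  rw [← Finset.sum_sdiff (Finset.subset_univ s) (f := f),
    ← Finset.sum_sdiff (Finset.subset_univ s) (f := g),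
    Finset.sum_congr rfl (g := g) (s₁ := Finset.univ \ s)]
  · ring
  · intro h hh; exact hfg h (Finset.mem_sdiff.1 hh).2

namespace Pair

variable {p q r : ℕ} {F E H : Type*} [Field F] [Fintype F] [Field E] [Fintype E] [Group H]
    {ρ : H →* Matrix (Fin 2) (Fin 2) F} {φ : H →* Matrix (Fin 2) (Fin 2) E}

/-- Sums over `H` in the coordinates given by `φ`. -/
lemma sum_model [DecidableEq E] [Fintype H] (P : Pair p q r F E H ρ φ)
    (f : Matrix (Fin 2) (Fin 2) E → ℕ) :
    ∑ h, f (φ h) = ∑ v ∈ sph r E, f (umat r v 1) + ∑ v ∈ sph r E, f (umat r v (-1)) := by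
  have hE1 : (1 : E) ≠ -1 := fun h => P.hE.two_ne (by linear_combination h)
  have h1 : ∑ h, f (φ h) = ∑ M ∈ Finset.univ.image φ, f M := by
    rw [Finset.sum_image]; exact P.injφ.injOn
  have h2 : Finset.univ.image φ = (({1, -1} : Finset E) ×ˢ sph r E).image
      (fun x => umat r x.2 x.1) := by
    ext M
    simp only [Finset.mem_image, Finset.mem_univ, true_and, Finset.mem_product, Finset.mem_insert,
      Finset.mem_singleton, Prod.exists]
    constructor
    · rintro ⟨h, rfl⟩
      obtain ⟨a, c, t, ht, h1, -, h3⟩ := P.uφ h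
      exact ⟨t, a, c, ⟨ht, by simp [sph, h1]⟩, h3.symm⟩
    · rintro ⟨t, a, c, ⟨ht, hv⟩, rfl⟩
      exact P.surj a c t ht (by simpa [sph] using hv)
  rw [h1, h2, Finset.sum_image, Finset.sum_product, Finset.sum_pair hE1]
  rintro ⟨t, a, c⟩ hv ⟨t', a', c'⟩ - heq
  have e (i j) := congrFun (congrFun heq i) j
  have e00 := e 0 0
  have e01 := e 0 1
  have e10 := e 1 0
  have e11 := e 1 1
  simp only [umat, Matrix.of_apply, Matrix.cons_val', Matrix.cons_val_zero, Matrix.cons_val_one,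
    Matrix.cons_val_fin_one] at e00 e01 e10 e11
  subst e00 e10
  have hN : a ^ (r + 1) - c ^ (r + 1) = 1 := by
    simpa [sph] using (Finset.mem_product.1 hv).2
  have : t = t' := by
    rw [_root_.pow_succ, _root_.pow_succ] at hN
    linear_combination (t' - t) * hN + a * e11 - c * e01
  rw [this]

lemma card_H [DecidableEq E] [Fintype H] (P : Pair p q r F E H ρ φ) :
    Fintype.card H = 2 * ((r + 1) * (r * (r - 1))) := by
  have := P.sum_model (fun _ => 1)
  simp only [Finset.sum_const, smul_eq_mul, mul_one, sph_card P.hE, Finset.card_univ] at this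
  omega

/-- The total number of fixed isotropic points. -/
lemma total_iso [DecidableEq F] [Fintype H] (P : Pair p q r F E H ρ φ) :
    ∑ h, (isoF q (ρ h)).card + 2 * (r + 1) = 2 * ((r + 1) * (r * (r - 1))) + 2 * (q + 1) := by
  classical
  obtain ⟨z, hz1, hφz, hρz, hsφ, hsρ⟩ := P.exists_z
  have h := sum_add_of_eq_outside (fun h => (isoF q (ρ h)).card) (fun h => (isoF r (φ h)).card)
    {1, z} (by
      intro h hh
      simp only [Finset.mem_insert, Finset.mem_singleton] at hh
      exact (P.compare (w := 1) odd_one (fun hs => hh (hsφ h hs)) (fun hs => hh (hsρ h hs))).1)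
  rw [Finset.sum_pair hz1.symm, Finset.sum_pair hz1.symm, map_one, map_one, hφz, hρz,
    card_isoF_one P.hF, card_isoF_one P.hE, card_isoF_neg_one P.hF, card_isoF_neg_one P.hE,
    P.sum_model (fun M => (isoF r M).card), sum_iso P.hE (Or.inl rfl),
    sum_iso P.hE (Or.inr rfl)] at h
  omega

/-- The total number of eigenvectors of norm `1` with eigenvalue a `w`-th root of unity. -/
lemma total_non [DecidableEq F] [Fintype H] (P : Pair p q r F E H ρ φ) {w : ℕ} (hw : Odd w) :
    (r + 1) * ∑ h, ∑ ζ ∈ Finset.univ.filter (fun ζ : F => ζ ^ w = 1), (nonF q (ρ h) ζ).card +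
      (q + 1) * ((r + 1) * (r * (r - 1))) =
    (q + 1) * (Nat.gcd (r + 1) w * (2 * ((r + 1) * (r * (r - 1))))) +
      (r + 1) * ((q + 1) * (q * (q - 1))) := by
  classical
  obtain ⟨z, hz1, hφz, hρz, hsφ, hsρ⟩ := P.exists_z
  set e := Nat.gcd (r + 1) w with he
  have heodd : Odd e := Odd.of_dvd_nat hw (Nat.gcd_dvd_right _ _)
  have h := sum_add_of_eq_outside
    (fun h => (r + 1) * ∑ ζ ∈ Finset.univ.filter (fun ζ : F => ζ ^ w = 1), (nonF q (ρ h) ζ).card)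
    (fun h => (q + 1) * ∑ ζ ∈ Finset.univ.filter (fun ζ : E => ζ ^ e = 1), (nonF r (φ h) ζ).card)
    {1, z} (by
      intro h hh
      simp only [Finset.mem_insert, Finset.mem_singleton] at hh
      exact (P.compare hw (fun hs => hh (hsφ h hs)) (fun hs => hh (hsρ h hs))).2)
  have hcard : (Finset.univ.filter (fun ζ : E => ζ ^ e = 1)).card = e := by
    obtain ⟨j, hj⟩ := Nat.gcd_dvd_left (r + 1) w
    refine card_pow_eq e (j * (r - 1)) ?_ 1 (one_pow _)
    rw [P.hE.card_sub_one, ← mul_assoc, he, ← hj]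
  have hmodel : ∑ h, ∑ ζ ∈ Finset.univ.filter (fun ζ : E => ζ ^ e = 1), (nonF r (φ h) ζ).card =
      e * (2 * ((r + 1) * (r * (r - 1)))) := by
    rw [Finset.sum_comm, Finset.sum_congr rfl (g := fun _ => 2 * ((r + 1) * (r * (r - 1)))),
      Finset.sum_const, hcard, smul_eq_mul]
    intro ζ hζ
    have hζ' : ζ ^ (r + 1) = 1 := by
      obtain ⟨j, hj⟩ := Nat.gcd_dvd_left (r + 1) w
      rw [hj, pow_mul, (Finset.mem_filter.1 hζ).2, one_pow]
    rw [P.sum_model (fun M => (nonF r M ζ).card), sum_non P.hE (Or.inl rfl) hζ',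
      sum_non P.hE (Or.inr rfl) hζ', two_mul]
  rw [Finset.sum_pair hz1.symm, Finset.sum_pair hz1.symm, map_one, map_one, hφz, hρz,
    sum_nonF_one P.hF, sum_nonF_one P.hE, sum_nonF_neg_one hw P.hF, sum_nonF_neg_one heodd P.hE,
    ← Finset.mul_sum, ← Finset.mul_sum, hmodel, mul_zero, mul_zero, add_zero, add_zero] at h
  exact h

end Pair

/-! ### The action on the Hermitian curve -/

section
variable {F : Type*} [Field F]

lemma glAct_mk (M : GL (Fin 3) F) (v : Fin 3 → F) (hv : v ≠ 0) (hv' : M.1 *ᵥ v ≠ 0) :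
    glAct M (Projectivization.mk F v hv) = Projectivization.mk F (M.1 *ᵥ v) hv' := by
  unfold glAct
  rw [Projectivization.map_mk]
  rfl

lemma gl_mulVec_ne (M : GL (Fin 3) F) {v : Fin 3 → F} (hv : v ≠ 0) : M.1 *ᵥ v ≠ 0 := by
  intro h
  apply hv
  have := congrArg (fun x => (M⁻¹).1 *ᵥ x) h
  simpa [Matrix.mulVec_mulVec, ← Units.val_mul] using this

lemma glAct_one (x : Projectivization F (Fin 3 → F)) : glAct 1 x = x := by
  induction x using Projectivization.ind with
  | h v hv => rw [glAct_mk _ _ _ (gl_mulVec_ne _ hv)]; simp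

lemma glAct_mul (M N : GL (Fin 3) F) (x : Projectivization F (Fin 3 → F)) :
    glAct (M * N) x = glAct M (glAct N x) := by
  induction x using Projectivization.ind with
  | h v hv =>
    rw [glAct_mk _ _ _ (gl_mulVec_ne _ hv), glAct_mk N _ _ (gl_mulVec_ne _ hv),
      glAct_mk M _ _ (gl_mulVec_ne _ (gl_mulVec_ne _ hv))]
    simp [Matrix.mulVec_mulVec]

lemma mk_mem_hermitianPts (q : ℕ) (v : Fin 3 → F) (hv : v ≠ 0) :
    Projectivization.mk F v hv ∈ hermitianPts q F ↔
      v 1 ^ (q + 1) = v 0 ^ (q + 1) - v 2 ^ (q + 1) := by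
  obtain ⟨a, ha⟩ := Projectivization.exists_smul_eq_mk_rep F v hv
  simp only [hermitianPts, Set.mem_ofPred_eq, ← ha, Pi.smul_apply]
  have ha0 : (a : F) ^ (q + 1) ≠ 0 := pow_ne_zero _ a.ne_zero
  simp only [Units.smul_def, smul_eq_mul, mul_pow, ← mul_sub]
  exact mul_right_inj' ha0

/-- The upper left two-by-two block. -/
def blk (M : Matrix (Fin 3) (Fin 3) F) : Matrix (Fin 2) (Fin 2) F := !![M 0 0, M 0 1; M 1 0, M 1 1]

/-- The matrix is block diagonal with lower right entry `1`. -/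
def IsBlk (M : Matrix (Fin 3) (Fin 3) F) : Prop :=
  M 0 2 = 0 ∧ M 1 2 = 0 ∧ M 2 0 = 0 ∧ M 2 1 = 0 ∧ M 2 2 = 1

lemma IsBlk.mulVec {M : Matrix (Fin 3) (Fin 3) F} (hM : IsBlk M) (x y z : F) :
    M *ᵥ ![x, y, z] = ![M 0 0 * x + M 0 1 * y, M 1 0 * x + M 1 1 * y, z] := by
  obtain ⟨h1, h2, h3, h4, h5⟩ := hM
  ext i
  fin_cases i <;> simp [Matrix.mulVec, dotProduct, Fin.sum_univ_three, h1, h2, h3, h4, h5]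

lemma IsBlk.ext {M N : Matrix (Fin 3) (Fin 3) F} (hM : IsBlk M) (hN : IsBlk N)
    (h : blk M = blk N) : M = N := by
  obtain ⟨h1, h2, h3, h4, h5⟩ := hM
  obtain ⟨k1, k2, k3, k4, k5⟩ := hN
  have e (i j) := congrFun (congrFun h i) j
  have e00 := e 0 0
  have e01 := e 0 1
  have e10 := e 1 0
  have e11 := e 1 1
  simp [blk] at e00 e01 e10 e11
  ext i j
  fin_cases i <;> fin_cases j <;> simp [*]

lemma blk_mul {M N : Matrix (Fin 3) (Fin 3) F} (hM : IsBlk M) : blk (M * N) = blk M * blk N := by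
  obtain ⟨h1, h2, h3, h4, h5⟩ := hM
  ext i j
  fin_cases i <;> fin_cases j <;>
    simp [blk, Matrix.mul_apply, Fin.sum_univ_three, Fin.sum_univ_two, h1, h2]

lemma blk_one : blk (1 : Matrix (Fin 3) (Fin 3) F) = 1 := by
  ext i j
  fin_cases i <;> fin_cases j <;> simp [blk]

lemma isBlk_one : IsBlk (1 : Matrix (Fin 3) (Fin 3) F) := by simp [IsBlk]

lemma IsBlk.mul {M N : Matrix (Fin 3) (Fin 3) F} (hM : IsBlk M) (hN : IsBlk N) :
    IsBlk (M * N) := by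
  obtain ⟨h1, h2, h3, h4, h5⟩ := hM
  obtain ⟨k1, k2, k3, k4, k5⟩ := hN
  refine ⟨?_, ?_, ?_, ?_, ?_⟩ <;>
    simp [Matrix.mul_apply, Fin.sum_univ_three, h1, h2, h3, h4, h5, k1, k2, k3, k4, k5]

lemma isBlk_of_mem {q : ℕ} {M : GL (Fin 3) F} (h : M ∈ MlSet q F) : IsBlk M.1 := by
  obtain ⟨a, c, τ, h1, h2, h3⟩ := h
  rw [h3]; simp [IsBlk]

lemma isU_of_mem {q : ℕ} {M : GL (Fin 3) F} (h : M ∈ MlSet q F) :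
    ∃ a c t, IsU q (blk M.1) a c t := by
  obtain ⟨a, c, τ, h1, h2, h3⟩ := h
  refine ⟨a, c, τ, h1, h2, ?_⟩
  rw [h3]; simp [blk]

/-- The map to the projective plane parametrizing the points `(1 : y : 0)` and `(x : y : 1)`. -/
def pt : F ⊕ (F × F) → Projectivization F (Fin 3 → F)
  | Sum.inl y => Projectivization.mk F ![1, y, 0] (fun h => by simpa using congrFun h 0)
  | Sum.inr v => Projectivization.mk F ![v.1, v.2, 1] (fun h => by simpa using congrFun h 2)

lemma pt_injective : Function.Injective (pt (F := F)) := by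
  rintro (y | ⟨x, y⟩) (y' | ⟨x', y'⟩) h
  all_goals
    simp only [pt] at h
    rw [Projectivization.mk_eq_mk_iff'] at h
    obtain ⟨a, ha⟩ := h
    have e0 := congrFun ha 0
    have e1 := congrFun ha 1
    have e2 := congrFun ha 2
    simp at e0 e1 e2
  · subst e0; simp at e1; simp [e1]
  · subst e2; simp at e0
  · subst e2; simp at e0 e1; simp [e0, e1]

lemma exists_pt {q : ℕ} {x : Projectivization F (Fin 3 → F)} (hx : x ∈ hermitianPts q F) :
    ∃ s, pt s = x := by
  induction x using Projectivization.ind with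
  | h v hv =>
    rw [mk_mem_hermitianPts] at hx
    by_cases h2 : v 2 = 0
    · have h0 : v 0 ≠ 0 := by
        intro h0
        rw [h0, h2] at hx
        simp at hx
        apply hv; ext i; fin_cases i <;> simp [h0, hx, h2]
      refine ⟨Sum.inl (v 1 / v 0), ?_⟩
      simp only [pt]
      rw [Projectivization.mk_eq_mk_iff']
      refine ⟨(v 0)⁻¹, ?_⟩
      ext i; fin_cases i <;> simp [h0, h2]; field_simp
    · refine ⟨Sum.inr (v 0 / v 2, v 1 / v 2), ?_⟩
      simp only [pt]
      rw [Projectivization.mk_eq_mk_iff']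
      refine ⟨(v 2)⁻¹, ?_⟩
      ext i; fin_cases i <;> simp [h2] <;> field_simp

/-- Unitary matrices preserve the Hermitian curve. -/
lemma glAct_mem [Fintype F] {q : ℕ} (hq : Herm q F) {M : GL (Fin 3) F} (hM : M ∈ MlSet q F)
    {x : Projectivization F (Fin 3 → F)} (hx : x ∈ hermitianPts q F) :
    glAct M x ∈ hermitianPts q F := by
  induction x using Projectivization.ind with
  | h v hv =>
    rw [mk_mem_hermitianPts] at hx
    rw [glAct_mk _ _ _ (gl_mulVec_ne M hv), mk_mem_hermitianPts]
    obtain ⟨a, c, t, h1, h2, h3⟩ := hM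
    rw [h3]
    simp only [Matrix.mulVec, dotProduct, Fin.sum_univ_three]
    simp only [Matrix.of_apply, Matrix.cons_val', Matrix.cons_val_zero, Matrix.cons_val_one,
      Matrix.cons_val_fin_one, Matrix.cons_val]
    simp only [← hq.bar_apply]
    simp only [hq.pow_succ] at h1 h2 hx ⊢
    simp only [map_add, map_mul, map_zero, map_one, hq.bar_bar]
    grind

variable [Fintype F] [DecidableEq F]

/-- The points of the Hermitian curve fixed by a block diagonal matrix. -/
lemma fixed_pts {q : ℕ} {M : GL (Fin 3) F} (hM : IsBlk M.1) :
    {x | x ∈ hermitianPts q F ∧ glAct M x = x} =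
      pt '' ((isoF q (blk M.1)).disjSum (nonF q (blk M.1) 1) : Set (F ⊕ (F × F))) := by
  have key : ∀ s : F ⊕ (F × F), (pt s ∈ hermitianPts q F ∧ glAct M (pt s) = pt s) ↔
      s ∈ (isoF q (blk M.1)).disjSum (nonF q (blk M.1) 1) := by
    rintro (y | ⟨x, y⟩)
    · simp only [pt, Finset.inl_mem_disjSum]
      have hv : (![1, y, 0] : Fin 3 → F) ≠ 0 := fun h => by simpa using congrFun h 0
      rw [glAct_mk _ _ _ (gl_mulVec_ne M hv), mk_mem_hermitianPts,
        Projectivization.mk_eq_mk_iff', hM.mulVec]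
      rw [isoF, Finset.mem_filter]
      simp only [blk, Finset.mem_univ, true_and]
      constructor
      · rintro ⟨h1, a, ha⟩
        have e0 := congrFun ha 0
        have e1 := congrFun ha 1
        simp at e0 e1 h1 ⊢
        refine ⟨h1, ?_⟩
        rw [← e1, ← e0, mul_comm]
      · rintro ⟨h1, h2⟩
        refine ⟨by simp [h1], M.1 0 0 + M.1 0 1 * y, ?_⟩
        simp at h2
        ext i; fin_cases i <;> simp
        linear_combination -h2
    · simp only [pt, Finset.inr_mem_disjSum]
      have hv : (![x, y, 1] : Fin 3 → F) ≠ 0 := fun h => by simpa using congrFun h 2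
      rw [glAct_mk _ _ _ (gl_mulVec_ne M hv), mk_mem_hermitianPts,
        Projectivization.mk_eq_mk_iff', hM.mulVec]
      rw [nonF, Finset.mem_filter]
      simp only [blk, Finset.mem_univ, true_and]
      refine and_congr ?_ ?_
      · simp
        constructor <;> intro h <;> linear_combination -h
      · constructor
        · rintro ⟨a, ha⟩
          have e2 := congrFun ha 2
          simp at e2
          subst e2
          have e0 := congrFun ha 0
          have e1 := congrFun ha 1
          simp at e0 e1 ⊢
          exact ⟨e0.symm, e1.symm⟩
        · rintro ⟨h1, h2⟩
          refine ⟨1, ?_⟩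
          simp at h1 h2
          ext i; fin_cases i <;> simp [h1, h2]
  ext x
  constructor
  · rintro ⟨h1, h2⟩
    obtain ⟨s, rfl⟩ := exists_pt h1
    exact ⟨s, (key s).1 ⟨h1, h2⟩, rfl⟩
  · rintro ⟨s, hs, rfl⟩
    exact (key s).2 hs

lemma card_fixed_pts {q : ℕ} {M : GL (Fin 3) F} (hM : IsBlk M.1) :
    {x | x ∈ hermitianPts q F ∧ glAct M x = x}.ncard =
      (isoF q (blk M.1)).card + (nonF q (blk M.1) 1).card := by
  rw [fixed_pts hM, Set.ncard_image_of_injective _ pt_injective, Set.ncard_coe_finset,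
    Finset.card_disjSum]

lemma isoF_smul {q : ℕ} {x : F} (hx : x ≠ 0) (M : Matrix (Fin 2) (Fin 2) F) :
    isoF q (x • M) = isoF q M := by
  ext y
  simp only [isoF, Finset.mem_filter, Finset.mem_univ, true_and, Matrix.smul_apply, smul_eq_mul]
  refine and_congr_right fun _ => ?_
  rw [show x * M 1 0 + x * M 1 1 * y = x * (M 1 0 + M 1 1 * y) by ring,
    show y * (x * M 0 0 + x * M 0 1 * y) = x * (y * (M 0 0 + M 0 1 * y)) by ring]
  exact mul_right_inj' hx

lemma nonF_smul {q : ℕ} {x : F} (hx : x ≠ 0) (M : Matrix (Fin 2) (Fin 2) F) :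
    nonF q (x⁻¹ • M) 1 = nonF q M x := by
  ext v
  simp only [nonF, Finset.mem_filter, Finset.mem_univ, true_and, Matrix.smul_apply, smul_eq_mul]
  refine and_congr_right fun _ => and_congr ?_ ?_ <;> field_simp


end

/-! ### Burnside's lemma for a direct product with a group of homologies -/

section
variable {F : Type*} [Field F]

/-- The homology `diag(ε, ε, 1)`. -/
def homol : Fˣ →* GL (Fin 3) F :=
  MonoidHom.mk' (fun ε => ⟨Matrix.diagonal ![(ε : F), ε, 1],
      Matrix.diagonal ![((ε⁻¹ : Fˣ) : F), (ε⁻¹ : Fˣ), 1],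
      by rw [Matrix.diagonal_mul_diagonal, ← Matrix.diagonal_one]; congr 1; ext i; fin_cases i <;> simp,
      by rw [Matrix.diagonal_mul_diagonal, ← Matrix.diagonal_one]; congr 1; ext i; fin_cases i <;> simp⟩)
    (fun a b => by
      ext1
      simp only [Units.val_mul, Matrix.diagonal_mul_diagonal]
      congr 1; ext i; fin_cases i <;> simp)

lemma homol_val (ε : Fˣ) : (homol ε).1 = Matrix.diagonal ![(ε : F), ε, 1] := rfl

lemma homol_injective : Function.Injective (homol (F := F)) := by
  intro a b h
  have h' : Matrix.diagonal ![(a : F), a, 1] = Matrix.diagonal ![(b : F), b, 1] :=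
    congrArg Units.val h
  have := congrFun (congrFun h' 0) 0
  simpa [Units.ext_iff] using this

lemma isBlk_homol (ε : Fˣ) : IsBlk (homol ε).1 := by
  rw [homol_val]; simp [IsBlk]

lemma blk_homol (ε : Fˣ) : blk (homol ε).1 = (ε : F) • 1 := by
  rw [homol_val]
  ext i j
  fin_cases i <;> fin_cases j <;> simp [blk]

lemma homol_comm (ε : Fˣ) {M : GL (Fin 3) F} (hM : IsBlk M.1) : homol ε * M = M * homol ε := by
  ext1
  refine IsBlk.ext ((isBlk_homol ε).mul hM) (hM.mul (isBlk_homol ε)) ?_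
  rw [Units.val_mul, Units.val_mul, blk_mul (isBlk_homol ε), blk_mul hM, blk_homol]; simp

/-- Burnside's lemma for the orbit count `numOrbits`. -/
lemma burnside [Fintype F] (L : Subgroup (GL (Fin 3) F)) [Fintype L]
    (O : Set (Projectivization F (Fin 3 → F))) (hO : ∀ g ∈ L, ∀ x ∈ O, glAct g x ∈ O) :
    numOrbits L O * Nat.card L = ∑ g : L, {x | x ∈ O ∧ glAct (g : GL (Fin 3) F) x = x}.ncard := by
  classical
  let _ : MulAction L O :=
    { smul := fun g x => ⟨glAct g.1 x.1, hO _ g.2 _ x.2⟩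
      one_smul := fun x => Subtype.ext (glAct_one x.1)
      mul_smul := fun g g' x => Subtype.ext (glAct_mul g.1 g'.1 x.1) }
  have hsm (g : L) (x : O) : ((g • x : O) : Projectivization F (Fin 3 → F)) = glAct g.1 x.1 := rfl
  have : Finite (Projectivization F (Fin 3 → F)) := inferInstance
  let _ : Fintype (Projectivization F (Fin 3 → F)) := Fintype.ofFinite _
  have hB := MulAction.sum_card_fixedBy_eq_card_orbits_mul_card_group L O
  have h1 : numOrbits L O = Fintype.card (Quotient (MulAction.orbitRel L O)) := by
    rw [← Nat.card_eq_fintype_card]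
    symm
    refine Nat.card_congr (Equiv.ofBijective (Quotient.lift (fun x : O =>
      (⟨{y | ∃ g ∈ L, glAct g x.1 = y}, x.1, x.2, rfl⟩ :
        ((fun x => {y | ∃ g ∈ L, glAct g x = y}) '' O : Set (Set _)))) ?_) ⟨?_, ?_⟩)
    · rintro a b ⟨g, hg⟩
      have hg' : glAct g.1 b.1 = a.1 := congrArg Subtype.val hg
      ext y
      constructor
      · rintro ⟨g', hg', rfl⟩
        refine ⟨g' * g.1, L.mul_mem hg' g.2, ?_⟩
        rw [glAct_mul]; congr 1
      · rintro ⟨g', hg'', rfl⟩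
        refine ⟨g' * g.1⁻¹, L.mul_mem hg'' (L.inv_mem g.2), ?_⟩
        rw [← hg', ← glAct_mul]; simp
    · rintro ⟨a⟩ ⟨b⟩ hab
      have hab' := congrArg Subtype.val hab
      have : a.1 ∈ {y | ∃ g ∈ L, glAct g b.1 = y} := by
        change {y | ∃ g ∈ L, glAct g a.1 = y} = {y | ∃ g ∈ L, glAct g b.1 = y} at hab'
        rw [← hab']
        exact ⟨1, L.one_mem, glAct_one _⟩
      obtain ⟨g, hg, hg'⟩ := this
      exact Quotient.sound ⟨⟨g, hg⟩, Subtype.ext hg'⟩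
    · rintro ⟨_, x, hx, rfl⟩
      exact ⟨Quotient.mk _ ⟨x, hx⟩, rfl⟩
  rw [h1, Nat.card_eq_fintype_card, ← hB]
  refine Finset.sum_congr rfl fun g _ => ?_
  rw [← Nat.card_eq_fintype_card, ← Nat.card_coe_set_eq]
  refine Nat.card_congr
    { toFun := fun x => ⟨x.1.1, x.1.2, congrArg Subtype.val x.2⟩
      invFun := fun x => ⟨⟨x.1, x.2.1⟩, Subtype.ext x.2.2⟩
      left_inv := fun x => rfl
      right_inv := fun x => rfl }

variable {q w : ℕ} {L H : Subgroup (GL (Fin 3) F)}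

/-- The intersection of `L` with the group of homologies of order dividing `(q + 1) / 2` consists
of all homologies of order dividing its cardinality `w`, because subgroups of a cyclic group are
determined by their order. -/
lemma inter_Z1 [Fintype F]
    (hc : Nat.card ((L : Set (GL (Fin 3) F)) ∩ Z1Set q F : Set (GL (Fin 3) F)) = w)
    (hw : 0 < w) (hq : 0 < (q + 1) / 2) :
    (L : Set (GL (Fin 3) F)) ∩ Z1Set q F = homol '' (rootsOfUnity w F : Set Fˣ) := by
  classical
  let S : Subgroup Fˣ := rootsOfUnity ((q + 1) / 2) F ⊓ L.comap homol
  have hS : (L : Set (GL (Fin 3) F)) ∩ Z1Set q F = homol '' (S : Set Fˣ) := by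
    ext M
    constructor
    · rintro ⟨hM, ε, h1, h2⟩
      have h0 : ε ≠ 0 := by rintro rfl; simp [hq.ne'] at h1
      have : M = homol (Units.mk0 ε h0) := by ext1; rw [h2, homol_val]; rfl
      refine ⟨Units.mk0 ε h0, ⟨?_, ?_⟩, this.symm⟩
      · refine (mem_rootsOfUnity _ _).2 ?_
        ext1; simpa using h1
      · change homol _ ∈ L
        rw [← this]; exact hM
    · rintro ⟨ε, ⟨h1, h2⟩, rfl⟩
      refine ⟨h2, ε, ?_, rfl⟩
      simpa using congrArg Units.val ((mem_rootsOfUnity _ _).1 h1)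
  have hSc : Nat.card S = w := by
    rw [← hc, hS, Nat.card_image_of_injective homol_injective]; rfl
  have : NeZero w := ⟨hw.ne'⟩
  have hle : S ≤ rootsOfUnity w F := by
    intro x hx
    rw [mem_rootsOfUnity]
    have := pow_card_eq_one' (x := (⟨x, hx⟩ : S))
    rw [hSc] at this
    exact congrArg Subtype.val this
  have : S = rootsOfUnity w F := by
    refine Subgroup.eq_of_le_of_card_ge hle ?_
    rw [hSc]
    exact card_rootsOfUnity F w
  rw [hS, this]

/-- The number of orbits of the product `L` of `H` and the homologies of order dividing `w`,
in terms of the fixed points of `H` at infinity and of its eigenvectors. -/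
lemma orbit_sum [Fintype F] [DecidableEq F] [Fintype H] (hF : Herm q F)
    (hL : (L : Set (GL (Fin 3) F)) ⊆ MlSet q F)
    (hc : Nat.card ((L : Set (GL (Fin 3) F)) ∩ Z1Set q F : Set (GL (Fin 3) F)) = w)
    (hw : 0 < w) (hq : 0 < (q + 1) / 2)
    (hgen : L = Subgroup.closure
      ((H : Set (GL (Fin 3) F)) ∪ ((L : Set (GL (Fin 3) F)) ∩ Z1Set q F)))
    (htriv : (H : Set (GL (Fin 3) F)) ∩ ((L : Set (GL (Fin 3) F)) ∩ Z1Set q F) ⊆ {1}) :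
    numOrbits L (hermitianPts q F) * (w * Fintype.card H) =
      w * ∑ h : H, (isoF q (blk h.1.1)).card +
      ∑ h : H, ∑ ζ ∈ Finset.univ.filter (fun ζ : F => ζ ^ w = 1), (nonF q (blk h.1.1) ζ).card := by
  classical
  have hwz : NeZero w := ⟨hw.ne'⟩
  have hZ := inter_Z1 hc hw hq
  have hHL : H ≤ L := by
    rw [hgen]; exact fun x hx => Subgroup.subset_closure (Or.inl hx)
  have hDL : ∀ ζ ∈ rootsOfUnity w F, homol ζ ∈ L := fun ζ hζ =>
    (hZ.symm.subset ⟨ζ, hζ, rfl⟩).1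
  have hblk : ∀ g ∈ L, IsBlk g.1 := fun g hg => isBlk_of_mem (hL hg)
  have hdec : ∀ g ∈ L, ∃ ζ ∈ rootsOfUnity w F, ∃ h ∈ H, homol ζ⁻¹ * h = g := by
    intro g hg
    rw [hgen] at hg
    induction hg using Subgroup.closure_induction with
    | mem x hx =>
      rcases hx with hx | hx
      · exact ⟨1, one_mem _, x, hx, by simp⟩
      · rw [hZ] at hx
        obtain ⟨ζ, hζ, rfl⟩ := hx
        exact ⟨ζ⁻¹, inv_mem hζ, 1, one_mem _, by simp⟩
    | one => exact ⟨1, one_mem _, 1, one_mem _, by simp⟩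
    | mul x y _ _ hx hy =>
      obtain ⟨ζ, hζ, h, hh, rfl⟩ := hx
      obtain ⟨ζ', hζ', h', hh', rfl⟩ := hy
      refine ⟨ζ * ζ', mul_mem hζ hζ', h * h', mul_mem hh hh', ?_⟩
      have e := homol_comm ζ'⁻¹ (hblk h (hHL hh))
      rw [mul_inv, map_mul, mul_assoc, ← mul_assoc (homol ζ'⁻¹), e]
      simp only [mul_assoc]
    | inv x _ hx =>
      obtain ⟨ζ, hζ, h, hh, rfl⟩ := hx
      refine ⟨ζ⁻¹, inv_mem hζ, h⁻¹, inv_mem hh, ?_⟩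
      rw [_root_.mul_inv_rev, ← map_inv, homol_comm _ (hblk _ (hHL (inv_mem hh)))]
  let f : H × rootsOfUnity w F → L := fun x =>
    ⟨homol (x.2.1)⁻¹ * x.1.1, L.mul_mem (hDL _ (inv_mem x.2.2)) (hHL x.1.2)⟩
  have hf : Function.Bijective f := by
    constructor
    · rintro ⟨⟨h, hh⟩, ⟨ζ, hζ⟩⟩ ⟨⟨h', hh'⟩, ⟨ζ', hζ'⟩⟩ hxy
      have e : homol ζ⁻¹ * h = homol ζ'⁻¹ * h' := congrArg Subtype.val hxy
      have e' : h * h'⁻¹ = homol (ζ * ζ'⁻¹) := by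
        rw [map_inv, map_inv, inv_mul_eq_iff_eq_mul] at e
        rw [e, map_mul, map_inv]; group
      have h1 := htriv ⟨H.mul_mem hh (H.inv_mem hh'), by
        rw [hZ, e']; exact ⟨_, mul_mem hζ (inv_mem hζ'), rfl⟩⟩
      rw [Set.mem_singleton_iff] at h1
      have h2 : h = h' := mul_inv_eq_one.1 h1
      have h3 : ζ = ζ' := by
        rw [h1, ← map_one homol] at e'
        exact mul_inv_eq_one.1 (homol_injective e').symm
      subst h2 h3; rfl
    · rintro ⟨g, hg⟩
      obtain ⟨ζ, hζ, h, hh, rfl⟩ := hdec g hg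
      exact ⟨(⟨h, hh⟩, ⟨ζ, hζ⟩), rfl⟩
  let _ : Fintype L := Fintype.ofFinite _
  have hcard : Nat.card (rootsOfUnity w F) = w := by
    rw [hZ, Nat.card_image_of_injective homol_injective] at hc
    exact hc
  have hcL : Nat.card L = w * Fintype.card H := by
    rw [← Nat.card_congr (Equiv.ofBijective f hf), Nat.card_prod, hcard, mul_comm,
      Nat.card_eq_fintype_card]
  have hB := burnside L (hermitianPts q F) (fun g hg x hx => glAct_mem hF (hL hg) hx)
  rw [hcL] at hB
  rw [hB, ← Fintype.sum_equiv (Equiv.ofBijective f hf)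
    (fun x => (isoF q (blk x.1.1.1)).card + (nonF q (blk x.1.1.1) (x.2.1 : F)).card),
    Fintype.sum_prod_type, Finset.mul_sum, ← Finset.sum_add_distrib]
  · refine Finset.sum_congr rfl fun h _ => ?_
    dsimp only
    rw [Finset.sum_add_distrib, Finset.sum_const, Finset.card_univ, ← Nat.card_eq_fintype_card,
      hcard, smul_eq_mul]
    congr 1
    refine Finset.sum_bij (fun ζ _ => (ζ.1 : F)) ?_ ?_ ?_ (fun _ _ => rfl)
    · rintro ⟨ζ, hζ⟩ _
      rw [mem_rootsOfUnity] at hζ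
      simpa using congrArg Units.val hζ
    · rintro ⟨a, _⟩ _ ⟨b, _⟩ _ hab
      exact Subtype.ext (Units.ext hab)
    · intro b hb
      simp only [Finset.mem_filter, Finset.mem_univ, true_and] at hb
      have h0 : b ≠ 0 := by rintro rfl; simp [hw.ne'] at hb
      exact ⟨⟨Units.mk0 b h0, by rw [mem_rootsOfUnity]; ext1; simpa using hb⟩,
        Finset.mem_univ _, rfl⟩
  · rintro ⟨h, ζ⟩
    change _ = Set.ncard {x | x ∈ hermitianPts q F ∧ glAct (homol ζ.1⁻¹ * h.1) x = x}
    have e : blk (homol ζ.1⁻¹ * h.1).1 = (ζ.1 : F)⁻¹ • blk h.1.1 := by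
      rw [Units.val_mul, blk_mul (isBlk_homol _), blk_homol]; simp
    rw [card_fixed_pts ((isBlk_homol _).mul (hblk _ (hHL h.2))), e,
      isoF_smul (inv_ne_zero ζ.1.ne_zero), nonF_smul ζ.1.ne_zero]

end

/-! ### The orbit count -/

/-- Numerical relations between `q` and `p ^ k`; the odd exponent `h / k` gives `q ≡ p ^ k (mod 4)`. -/
lemma arith {p h q k : ℕ} (hp : p.Prime) (hpodd : Odd p) (hk0 : 0 < k) (hk : k ∣ h)
    (hodd : Odd (h / k)) (hq : q = p ^ h) (hq4 : q % 4 = 1) :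
    1 < p ^ k ∧ p ∣ p ^ k ∧ p ^ k % 4 = 1 ∧ p ^ k - 1 ∣ q - 1 ∧ p ^ k + 1 ∣ q + 1 := by
  have hqr : q = (p ^ k) ^ (h / k) := by rw [← pow_mul, Nat.mul_div_cancel' hk, hq]
  have hro : Odd (p ^ k) := hpodd.pow
  refine ⟨Nat.one_lt_pow hk0.ne' hp.one_lt, dvd_pow_self p hk0.ne', ?_, ?_, ?_⟩
  · obtain ⟨m, hm⟩ := hodd
    have h2 : (p ^ k) ^ 2 % 4 = 1 := by
      rw [Nat.pow_mod]
      rcases Nat.odd_mod_four_iff.1 (Nat.odd_iff.1 hro) with h | h <;> rw [h]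
    rw [hqr, hm, pow_succ, pow_mul, Nat.mul_mod, Nat.pow_mod, h2, one_pow] at hq4
    simpa using hq4
  · rw [hqr]
    simpa using Nat.sub_dvd_pow_sub_pow (p ^ k) 1 (h / k)
  · rw [hqr]
    simpa using hodd.nat_add_dvd_pow_add_pow (p ^ k) 1

/-- The orbit number, from Burnside's sum and the two totals. -/
lemma final_eq {N A B q r w e : ℕ} (hr : 1 < r) (hw : 0 < w) (hq : 0 < q)
    (hN : N * (w * (2 * ((r + 1) * (r * (r - 1))))) = w * A + B)
    (hA : A + 2 * (r + 1) = 2 * ((r + 1) * (r * (r - 1))) + 2 * (q + 1))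
    (hB : (r + 1) * B + (q + 1) * ((r + 1) * (r * (r - 1))) =
      (q + 1) * (e * (2 * ((r + 1) * (r * (r - 1))))) + (r + 1) * ((q + 1) * (q * (q - 1)))) :
    (N : ℚ) = 1 + ((q : ℚ) - r) / ((r : ℚ) * ((r : ℚ) - 1) * ((r : ℚ) + 1)) +
      ((q : ℚ) + 1) * (e : ℚ) / (((r : ℚ) + 1) * (w : ℚ)) +
      ((q : ℚ) ^ 2 - (q : ℚ) - (r : ℚ) * ((r : ℚ) - 1)) * ((q : ℚ) + 1)
        / (2 * (r : ℚ) * ((r : ℚ) ^ 2 - 1) * (w : ℚ)) := by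
  have hr' : (1 : ℚ) < r := by exact_mod_cast hr
  have hw' : (w : ℚ) ≠ 0 := by exact_mod_cast hw.ne'
  obtain ⟨r, rfl⟩ := Nat.exists_eq_add_of_le' hr.le
  obtain ⟨q, rfl⟩ := Nat.exists_eq_add_of_le' hq
  simp only [Nat.add_sub_cancel] at hN hA hB
  have hN' := congrArg (Nat.cast (R := ℚ)) hN
  have hA' := congrArg (Nat.cast (R := ℚ)) hA
  have hB' := congrArg (Nat.cast (R := ℚ)) hB
  push_cast at hN' hA' hB' hr' ⊢
  have h0 : (r : ℚ) ≠ 0 := by intro h; rw [h] at hr'; norm_num at hr'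
  have h1 : (r : ℚ) + 1 ≠ 0 := by positivity
  have h2 : (r : ℚ) + 1 + 1 ≠ 0 := by positivity
  have hB2 : (B : ℚ) = ((q : ℚ) + 1 + 1) * (e * (2 * ((r + 1) * r))) +
      (q + 1 + 1) * ((q + 1) * q) - (q + 1 + 1) * ((r + 1) * r) :=
    mul_left_cancel₀ h2 (by linear_combination hB')
  have hA2 : (A : ℚ) = 2 * (((r : ℚ) + 1 + 1) * ((r + 1) * r)) + 2 * (q + 1 + 1) -
      2 * (r + 1 + 1) := by linear_combination hA'
  rw [hA2, hB2] at hN'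
  have e1 : ((r : ℚ) + 1) ^ 2 - 1 = r * (r + 1 + 1) := by ring
  have e2 : (r : ℚ) + 1 - 1 = r := by ring
  rw [e1, e2]
  have h3 : (w : ℚ) * (2 * (((r : ℚ) + 1 + 1) * ((r + 1) * r))) ≠ 0 := by positivity
  refine mul_right_cancel₀ h3 (hN'.trans ?_)
  field_simp
  ring

theorem stmt16 (p h q k w : ℕ) [hp : Fact (Nat.Prime p)] (hpodd : Odd p)
    (hh : 1 ≤ h) (hq : q = p ^ h) (hq4 : q % 4 = 1)
    (F : Type*) [Field F] [Fintype F] (hF : Fintype.card F = q ^ 2)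
    (hk : k ∣ h) (hodd : Odd (h / k)) (hw : w ∣ (q + 1) / 2)
    (L : Subgroup (GL (Fin 3) F)) (hLMl : (L : Set (GL (Fin 3) F)) ⊆ MlSet q F)
    (hZ1card : Nat.card ((L : Set (GL (Fin 3) F)) ∩ Z1Set q F : Set (GL (Fin 3) F)) = w)
    (H : Subgroup (GL (Fin 3) F))
    (hHiso : ∃ φ : ↥H → Matrix (Fin 2) (Fin 2) (GaloisField p (2 * k)),
      Function.Injective φ ∧ (∀ x y : ↥H, φ (x * y) = φ x * φ y) ∧
      Set.range φ = {N : Matrix (Fin 2) (Fin 2) (GaloisField p (2 * k)) |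
        ∃ a c t : GaloisField p (2 * k), (t = 1 ∨ t = -1) ∧
          a ^ (p ^ k + 1) - c ^ (p ^ k + 1) = 1 ∧
          N = !![a, t * c ^ (p ^ k); c, t * a ^ (p ^ k)]})
    (hgen : L = Subgroup.closure
      ((H : Set (GL (Fin 3) F)) ∪ ((L : Set (GL (Fin 3) F)) ∩ Z1Set q F)))
    (htriv : (H : Set (GL (Fin 3) F)) ∩ ((L : Set (GL (Fin 3) F)) ∩ Z1Set q F) ⊆ {1}) :
    (numOrbits L (hermitianPts q F) : ℚ)
      = 1 + ((q : ℚ) - (p : ℚ) ^ k)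
          / ((p : ℚ) ^ k * ((p : ℚ) ^ k - 1) * ((p : ℚ) ^ k + 1))
        + ((q : ℚ) + 1) * (Nat.gcd (p ^ k + 1) w : ℚ) / (((p : ℚ) ^ k + 1) * (w : ℚ))
        + ((q : ℚ) ^ 2 - (q : ℚ) - (p : ℚ) ^ k * ((p : ℚ) ^ k - 1)) * ((q : ℚ) + 1)
          / (2 * (p : ℚ) ^ k * ((p : ℚ) ^ (2 * k) - 1) * (w : ℚ)) := by
  classical
  have hk0 : 0 < k := Nat.pos_of_dvd_of_pos hk (by omega)
  obtain ⟨hp1, hpr, hr4, hsub, hadd⟩ := arith hp.out hpodd hk0 hk hodd hq hq4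
  set r := p ^ k with hr
  have hq1 : 0 < (q + 1) / 2 := by omega
  have hw0 : 0 < w := Nat.pos_of_dvd_of_pos hw hq1
  have hwodd : Odd w := Odd.of_dvd_nat (Nat.odd_iff.2 (by omega)) hw
  have cF : CharP F p := by
    have : CharP F (ringChar F) := ringChar.charP F
    obtain ⟨n, hn, hn'⟩ := FiniteField.card F (ringChar F)
    have h1 : ringChar F ∣ p ^ (h * 2) := by
      rw [pow_mul, ← hq, ← hF, hn']
      exact dvd_pow_self _ n.pos.ne'
    have h2 := (Nat.prime_dvd_prime_iff_eq hn hp.out).1 (hn.dvd_of_dvd_pow h1)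
    rwa [h2] at this
  have hermF : Herm q F := ⟨Nat.odd_iff.2 (by omega), hF, fun x y => by
    rw [hq]; exact add_pow_char_pow x y p _⟩
  let _ : Fintype (GaloisField p (2 * k)) := Fintype.ofFinite _
  have hermE : Herm r (GaloisField p (2 * k)) := ⟨Nat.odd_iff.2 (by omega), by
      rw [← Nat.card_eq_fintype_card, GaloisField.card p (2 * k) (by omega), hr, ← pow_mul,
        mul_comm], fun x y => by rw [hr]; exact add_pow_char_pow x y p _⟩
  let _ : Fintype H := Fintype.ofFinite _
  have hHL : H ≤ L := by
    rw [hgen]; exact fun x hx => Subgroup.subset_closure (Or.inl hx)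
  have hblk : ∀ x : H, IsBlk x.1.1 := fun x => isBlk_of_mem (hLMl (hHL x.2))
  let ρ : H →* Matrix (Fin 2) (Fin 2) F :=
    { toFun := fun x => blk x.1.1
      map_one' := blk_one
      map_mul' := fun x y => blk_mul (hblk x) }
  obtain ⟨φ', hinj, hmul, hrange⟩ := hHiso
  -- A semigroup homomorphism whose image contains the identity matrix preserves identities.
  have hone : φ' 1 = 1 := by
    have : (1 : Matrix (Fin 2) (Fin 2) (GaloisField p (2 * k))) ∈ Set.range φ' := by
      rw [hrange]
      refine ⟨1, 0, 1, Or.inl rfl, by simp, ?_⟩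
      have hr0 : r ≠ 0 := by omega
      simp [hr0, Matrix.one_fin_two]
    obtain ⟨x, hx⟩ := this
    have h1 := hmul x 1
    rw [mul_one, hx, one_mul] at h1
    exact h1.symm
  let φ : H →* Matrix (Fin 2) (Fin 2) (GaloisField p (2 * k)) :=
    { toFun := φ'
      map_one' := hone
      map_mul' := hmul }
  have P : Pair p q r F (GaloisField p (2 * k)) H ρ φ :=
    { hF := hermF
      hE := hermE
      pp := hp.out
      cF := cF
      cE := inferInstance
      pr := hpr
      r4 := hr4
      q4 := hq4
      sub := hsub
      add := hadd
      injρ := fun x y hxy => Subtype.ext (Units.ext ((hblk x).ext (hblk y) hxy))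
      injφ := hinj
      uρ := fun x => isU_of_mem (hLMl (hHL x.2))
      uφ := fun x => by
        have : φ' x ∈ Set.range φ' := ⟨x, rfl⟩
        rw [hrange] at this
        obtain ⟨a, c, t, ht, h1, h2⟩ := this
        refine ⟨a, c, t, ht, h1, ?_, h2⟩
        have he : Even (r + 1) := by rw [Nat.even_iff]; omega
        rcases ht with rfl | rfl
        · simp
        · exact he.neg_one_pow
      surj := fun a c t ht h1 => by
        have : !![a, t * c ^ r; c, t * a ^ r] ∈ Set.range φ' := by
          rw [hrange]; exact ⟨a, c, t, ht, h1, rfl⟩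
        exact this }
  have hN := orbit_sum hermF hLMl hZ1card hw0 hq1 hgen htriv
  rw [P.card_H] at hN
  have h1 := P.total_iso
  have h2 := P.total_non hwodd
  have hpk : (p : ℚ) ^ k = (r : ℚ) := by rw [hr]; push_cast; rfl
  have hp2k : (p : ℚ) ^ (2 * k) = (r : ℚ) ^ 2 := by rw [← hpk, ← pow_mul, mul_comm]
  rw [hpk, hp2k]
  exact final_eq (by omega) hw0 (by omega) hN h1 h2
end

section
/- Let σ ∈ M_ℓ be a nontrivial element that fixes (in the projective action) some point R ∈ O not lying on the line Z = 0 (i.e. R has a representative with nonzero third coordinate). Then σ is a homology of type (A): the order of σ divides q+1, and there exist a line ℓ' in ℙ²(F) and a point P' ∈ ℙ²(F) with P' ∉ ℓ' such that σ fixes every point of ℓ' and fixes P'. -/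
/-!
Write `R = (x : y : z)` with `z ≠ 0`. The last row of `σ` is `(0, 0, 1)`, so `σ` fixes the vector
`(x, y, z)` itself, and hence `u = (x, y, 0)` and `e₃`. The upper left block of `σ` is unitary, with
determinant `τ`, for the form `X^(q+1) - Y^(q+1)`, and `u` is not isotropic, because
`x^(q+1) - y^(q+1) = z^(q+1) ≠ 0`. Therefore the vector `w = (y^q, x^q, 0)` orthogonal to `u` is an
eigenvector, with eigenvalue `τ`; concretely, this is the `q`-th power of the equations saying that
`u` is fixed. In the basis `u, w, e₃` the element `σ` is `diag(1, τ, 1)`, so `σ^(q+1) = 1`, the line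
spanned by `u` and `e₃` is fixed pointwise, and the point `w` off that line is fixed.
-/

open Matrix

/-- The projective action fixes a point exactly when its representative is an eigenvector. -/
lemma glAct_eq_self_iff {F : Type*} [Field F] (M : GL (Fin 3) F)
    (x : Projectivization F (Fin 3 → F)) :
    glAct M x = x ↔ ∃ k : F, k • x.rep = (M : Matrix (Fin 3) (Fin 3) F) *ᵥ x.rep := by
  have hne : (M : Matrix (Fin 3) (Fin 3) F) *ᵥ x.rep ≠ 0 := by
    intro h0
    apply x.rep_nonzero
    have h1 := congrArg (fun v => ((M⁻¹ : GL (Fin 3) F) : Matrix (Fin 3) (Fin 3) F) *ᵥ v) h0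
    simpa only [Matrix.mulVec_mulVec, Units.inv_mul, Matrix.one_mulVec, Matrix.mulVec_zero] using h1
  have h2 : glAct M x = Projectivization.mk F _ hne := by
    conv_lhs => rw [← x.mk_rep]
    rfl
  rw [h2]
  conv_lhs => rhs; rw [← x.mk_rep]
  rw [Projectivization.mk_eq_mk_iff']

/-- The point spanned by an eigenvector is fixed. -/
lemma glAct_mk_eq_self {F : Type*} [Field F] (M : GL (Fin 3) F) (v : Fin 3 → F) (hv : v ≠ 0)
    (k : F) (h : (M : Matrix (Fin 3) (Fin 3) F) *ᵥ v = k • v) :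
    glAct M (Projectivization.mk F v hv) = Projectivization.mk F v hv := by
  rw [glAct_eq_self_iff]
  obtain ⟨a, ha⟩ := Projectivization.exists_smul_eq_mk_rep F v hv
  refine ⟨k, ?_⟩
  rw [← ha, Units.smul_def, Matrix.mulVec_smul, h, smul_comm]

theorem stmt18 (p h q : ℕ) (hp : p.Prime) (hh : 1 ≤ h) (hq : q = p ^ h)
    (F : Type*) [Field F] [Fintype F] (hF : Fintype.card F = q ^ 2)
    (σ : GL (Fin 3) F) (hσMl : σ ∈ MlSet q F) (hσne : σ ≠ 1)
    (R : Projectivization F (Fin 3 → F)) (hR : R ∈ hermitianPts q F)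
    (hR3 : R.rep 2 ≠ 0) (hfix : glAct σ R = R) :
    orderOf σ ∣ q + 1 ∧
    ∃ (W : Submodule F (Fin 3 → F)) (P' : Projectivization F (Fin 3 → F)),
      Module.finrank F W = 2 ∧ P'.rep ∉ W ∧
      (∀ x : Projectivization F (Fin 3 → F), x.rep ∈ W → glAct σ x = x) ∧
      glAct σ P' = P' := by
  obtain ⟨a, c, τ, hac, hτ, hM⟩ := hσMl
  rw [glAct_eq_self_iff] at hfix
  obtain ⟨k, hk⟩ := hfix
  change R.rep 1 ^ (q + 1) = R.rep 0 ^ (q + 1) - R.rep 2 ^ (q + 1) at hR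
  generalize R.rep = r at *
  obtain ⟨x, hx⟩ : ∃ x, x = r 0 := ⟨_, rfl⟩
  obtain ⟨y, hy⟩ : ∃ y, y = r 1 := ⟨_, rfl⟩
  have e0 := congrFun hk 0
  have e1 := congrFun hk 1
  have e2 := congrFun hk 2
  simp [hM, Matrix.mulVec, dotProduct, Fin.sum_univ_three] at e0 e1 e2
  have hk1 : k = 1 := by simpa [hR3] using e2
  subst hk1
  rw [← hx, ← hy] at e0 e1 hR
  have hdet : x ^ (q + 1) - y ^ (q + 1) ≠ 0 := by
    rw [hR]; simpa using hR3
  -- `t ↦ t ^ q` is additive because `q` is a power of the characteristic.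
  have : Fact p.Prime := ⟨hp⟩
  have hchar : CharP F p := by
    have : Fintype.card F = p ^ (h * 2) := by rw [hF, hq, pow_mul]
    exact charP_of_card_eq_prime_pow this
  have hadd : ∀ s t : F, (s + t) ^ q = s ^ q + t ^ q := by
    intro s t; rw [hq]; exact add_pow_char_pow s t p h
  have hqq : ∀ s : F, (s ^ q) ^ q = s := by
    intro s
    rw [← pow_mul, ← sq, ← hF, FiniteField.pow_card]
  have f0 := congrArg (· ^ q) e0
  have f1 := congrArg (· ^ q) e1
  simp only [one_mul, hadd, mul_pow, hqq] at f0 f1 e0 e1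
  have hτ' : τ * τ ^ q = 1 := by rw [← hτ]; ring
  have g0 : a * y ^ q + τ * c ^ q * x ^ q = τ * y ^ q := by
    linear_combination (-τ) * f1 - a * y ^ q * hτ'
  have g1 : c * y ^ q + τ * a ^ q * x ^ q = τ * x ^ q := by
    linear_combination (-τ) * f0 - c * y ^ q * hτ'
  have hw : (σ : Matrix (Fin 3) (Fin 3) F) *ᵥ ![y ^ q, x ^ q, 0] = τ • ![y ^ q, x ^ q, 0] := by
    rw [hM]; ext i
    fin_cases i <;> simp [Matrix.mulVec, dotProduct, Fin.sum_univ_three, g0, g1]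
  have hw0 : ![y ^ q, x ^ q, 0] ≠ 0 := by
    intro h0
    have i0 := congrFun h0 0
    have i1 := congrFun h0 1
    simp at i0 i1
    apply hdet
    rw [i0.1, i1.1]; simp
  constructor
  · apply orderOf_dvd_of_pow_eq_one
    apply Units.ext
    rw [Units.val_pow_eq_pow_val, Units.val_one]
    -- The columns of `B` are the eigenvectors `u`, `w`, `e₃`.
    let B : Matrix (Fin 3) (Fin 3) F := !![x, y ^ q, 0; y, x ^ q, 0; 0, 0, 1]
    have hB : IsUnit B := by
      rw [Matrix.isUnit_iff_isUnit_det, isUnit_iff_ne_zero]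
      convert hdet using 1
      simp [B, Matrix.det_fin_three]; ring
    have hs : SemiconjBy B (Matrix.diagonal ![1, τ, 1]) (σ : Matrix (Fin 3) (Fin 3) F) := by
      rw [SemiconjBy, hM]
      ext i j
      fin_cases i <;> fin_cases j <;>
        simp [B, Matrix.mul_apply, Fin.sum_univ_three, Matrix.diagonal] <;>
        first | linear_combination e0 | linear_combination e1 | linear_combination -g0
              | linear_combination -g1
    have hs' := hs.pow_right (q + 1)
    have hD : (Matrix.diagonal ![1, τ, 1] : Matrix (Fin 3) (Fin 3) F) ^ (q + 1) = 1 := by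
      rw [Matrix.diagonal_pow, ← Matrix.diagonal_one]
      congr 1
      ext i; fin_cases i <;> simp [hτ]
    rw [hD, SemiconjBy, mul_one] at hs'
    exact (hB.mul_right_cancel (by rw [one_mul]; exact hs')).symm
  · refine ⟨Submodule.span F {![x, y, 0], ![0, 0, 1]}, Projectivization.mk F _ hw0, ?_, ?_, ?_,
      glAct_mk_eq_self σ _ hw0 τ hw⟩
    · have hli : LinearIndependent F ![![x, y, 0], ![0, 0, 1]] := by
        rw [LinearIndependent.pair_iff]
        intro s t hst
        have i0 := congrFun hst 0
        have i1 := congrFun hst 1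
        have i2 := congrFun hst 2
        simp at i0 i1 i2
        refine ⟨?_, i2⟩
        by_contra hs
        simp only [hs, false_or] at i0 i1
        apply hdet
        rw [i0, i1]; simp
      have hcard := finrank_span_eq_card hli
      rw [Matrix.range_cons_cons_empty] at hcard
      simpa using hcard
    · obtain ⟨b, hb⟩ := Projectivization.exists_smul_eq_mk_rep F _ hw0
      rw [← hb, Units.smul_def, Submodule.smul_mem_iff _ b.ne_zero, Submodule.mem_span_pair]
      rintro ⟨s, t, hst⟩
      have i0 := congrFun hst 0
      have i1 := congrFun hst 1
      simp at i0 i1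
      apply hdet
      linear_combination y * i0 - x * i1
    · intro v hv
      rw [glAct_eq_self_iff]
      refine ⟨1, ?_⟩
      obtain ⟨s, t, hst⟩ := Submodule.mem_span_pair.1 hv
      rw [← hst, hM]
      ext i
      fin_cases i <;> simp [Matrix.mulVec, dotProduct, Fin.sum_univ_three]
      · linear_combination s * e0
      · linear_combination s * e1
end
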